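/- Let A ⊂ F_p satisfy |A| < p^{2/3}. Then for any subset B ⊂ F_p, E_4^+(A,B) ≲ |B|³ |AA|² |A|^{-1}, where E_4^+(A,B) counts 8-tuples with a_1-b_1 = a_2-b_2 = a_3-b_3 = a_4-b_4, a_i ∈ A, b_i ∈ B, and ≲ hides absolute constants and logarithmic factors. -/

import Mathlib

open Pointwise


namespace RPP
open MvPolynomial

/-- chain rule -/
lemma chain {K B : Type*} [Field K] [CommRing B] [Algebra K B]
    (φ : MvPolynomial (Fin 3) K →ₐ[K] B) (E : Derivation K B B) (g : MvPolynomial (Fin 3) K) :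
    E (φ g) = ∑ i, φ (pderiv i g) * E (φ (X i)) := by
  induction g using MvPolynomial.induction_on with
  | C a =>
    have : φ (C a) = algebraMap K B a := φ.commutes a
    simp [this]
  | add p q hp hq => simp [hp, hq, Finset.sum_add_distrib, add_mul]
  | mul_X p i hp =>
    rw [map_mul, Derivation.leibniz, hp]
    simp only [smul_eq_mul, Derivation.leibniz, map_add, map_mul, pderiv_X, add_mul,
      Finset.sum_add_distrib, Finset.mul_sum]
    congr 1
    · rw [Finset.sum_eq_single i]
      · simp
      · intro b _ hb
        simp [Pi.single_apply, hb.symm]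
      · simp
    · apply Finset.sum_congr rfl
      intros; ring

lemma tdeg_pderiv {K : Type*} [Field K] (i : Fin 3) (g : MvPolynomial (Fin 3) K) :
    (pderiv i g).totalDegree ≤ g.totalDegree := by
  conv_lhs => rw [g.as_sum, map_sum]
  refine totalDegree_finsetSum_le ?_
  intro s hs
  rw [pderiv_monomial]
  refine (totalDegree_monomial_le _ _).trans ?_
  refine le_trans ?_ (le_totalDegree hs)
  exact Finsupp.degree_mono (by simp) 

lemma natDegree_aeval_le {K B : Type*} [Field K] [CommRing B] [Algebra K B] {m : ℕ}
    (F : MvPolynomial (Fin 3) K) (hF : F.totalDegree ≤ m)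
    (f : Fin 3 → Polynomial B) (hf : ∀ i, (f i).natDegree ≤ 1) :
    (MvPolynomial.aeval f F).natDegree ≤ m := by
  rw [MvPolynomial.aeval_def, MvPolynomial.eval₂]
  apply (Polynomial.natDegree_sum_le _ _).trans
  apply Finset.sup_le
  intro d hd
  simp only [Function.comp_apply]
  rw [Polynomial.algebraMap_apply]
  apply (Polynomial.natDegree_C_mul_le _ _).trans
  apply (Polynomial.natDegree_prod_le _ _).trans
  have : ∑ i ∈ d.support, (d i) ≤ m := by
    refine le_trans ?_ hF
    exact Finset.le_sup_of_le hd le_rfl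
  apply (Finset.sum_le_sum _).trans this
  rintro i -
  apply Polynomial.natDegree_pow_le.trans
  simpa using Nat.mul_le_mul le_rfl (hf i)

/-- variables: `0 = z`, `1 = x`, `2 = y`. -/
noncomputable def red {K : Type*} [Field K] (r : K × K × K) :
    MvPolynomial (Fin 3) K →ₐ[K] Polynomial K :=
  aeval ![Polynomial.C r.2.1 * Polynomial.X + Polynomial.C r.2.2, Polynomial.C r.1, Polynomial.X]

noncomputable def blue {K : Type*} [Field K] (b : K × K × K) :
    MvPolynomial (Fin 3) K →ₐ[K] Polynomial K :=
  aeval ![Polynomial.C b.2.1 * Polynomial.X + Polynomial.C b.2.2, Polynomial.X, Polynomial.C b.1]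

section
variable {K : Type*} [Field K]

@[simp] lemma red_X0 (r : K × K × K) : red r (X 0) =
    Polynomial.C r.2.1 * Polynomial.X + Polynomial.C r.2.2 := by simp [red]
@[simp] lemma red_X1 (r : K × K × K) : red r (X 1) = Polynomial.C r.1 := by simp [red]
@[simp] lemma red_X2 (r : K × K × K) : red r (X 2) = Polynomial.X := by simp [red]
@[simp] lemma red_C (r : K × K × K) (a : K) : red r (C a) = Polynomial.C a := by
  simp [red]
@[simp] lemma blue_X0 (r : K × K × K) : blue r (X 0) =
    Polynomial.C r.2.1 * Polynomial.X + Polynomial.C r.2.2 := by simp [blue]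
@[simp] lemma blue_X1 (r : K × K × K) : blue r (X 1) = Polynomial.X := by simp [blue]
@[simp] lemma blue_X2 (r : K × K × K) : blue r (X 2) = Polynomial.C r.1 := by simp [blue]
@[simp] lemma blue_C (r : K × K × K) (a : K) : blue r (C a) = Polynomial.C a := by
  simp [blue]

lemma natDegree_red (r : K × K × K) (F : MvPolynomial (Fin 3) K) :
    (red r F).natDegree ≤ F.totalDegree := by
  apply natDegree_aeval_le F le_rfl
  intro i
  fin_cases i <;> simp
  exact (Polynomial.natDegree_C_mul_le _ _).trans Polynomial.natDegree_X_le

lemma natDegree_blue (r : K × K × K) (F : MvPolynomial (Fin 3) K) :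
    (blue r F).natDegree ≤ F.totalDegree := by
  apply natDegree_aeval_le F le_rfl
  intro i
  fin_cases i <;> simp
  exact (Polynomial.natDegree_C_mul_le _ _).trans Polynomial.natDegree_X_le

lemma eval_red_eq_eval_blue (r b : K × K × K) (h : r.2.1 * b.1 + r.2.2 = b.2.1 * r.1 + b.2.2)
    (F : MvPolynomial (Fin 3) K) :
    (red r F).eval b.1 = (blue b F).eval r.1 := by
  have : (Polynomial.aeval b.1).comp (red r) = (Polynomial.aeval r.1).comp (blue b) := by
    apply MvPolynomial.algHom_ext
    intro i
    fin_cases i <;> simp [h]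
  have h2 := congrArg (fun φ => φ F) this
  simpa [Polynomial.aeval_def] using h2

/-- the tangential derivation -/
noncomputable def DD (f : MvPolynomial (Fin 3) K) :
    Derivation K (MvPolynomial (Fin 3) K) (MvPolynomial (Fin 3) K) :=
  (pderiv 0 f) • pderiv 1 - (pderiv 1 f) • pderiv 0

lemma DD_apply (f g : MvPolynomial (Fin 3) K) :
    DD f g = pderiv 0 f * pderiv 1 g - pderiv 1 f * pderiv 0 g := by
  simp [DD]

/-- flecnode polynomial -/
noncomputable def GG (f : MvPolynomial (Fin 3) K) : MvPolynomial (Fin 3) K :=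
  pderiv 1 f * DD f (pderiv 0 f) - pderiv 0 f * DD f (pderiv 1 f)

lemma tdeg_sub_le {a b : MvPolynomial (Fin 3) K} {n : ℕ} (ha : a.totalDegree ≤ n)
    (hb : b.totalDegree ≤ n) : (a - b).totalDegree ≤ n :=
  (totalDegree_sub a b).trans (max_le ha hb)

lemma tdeg_mul_le {a b : MvPolynomial (Fin 3) K} {n m : ℕ} (ha : a.totalDegree ≤ n)
    (hb : b.totalDegree ≤ m) : (a * b).totalDegree ≤ n + m :=
  (totalDegree_mul a b).trans (add_le_add ha hb)

lemma tdeg_GG (f : MvPolynomial (Fin 3) K) : (GG f).totalDegree ≤ 3 * f.totalDegree := by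
  set D := f.totalDegree with hD
  have h1 : ∀ i, (pderiv i f).totalDegree ≤ D := fun i => tdeg_pderiv i f
  have h2 : ∀ i j, (pderiv i (pderiv j f)).totalDegree ≤ D :=
    fun i j => (tdeg_pderiv i _).trans (h1 j)
  have h3 : ∀ j, (DD f (pderiv j f)).totalDegree ≤ D + D := by
    intro j
    rw [DD_apply]
    exact tdeg_sub_le (tdeg_mul_le (h1 _) (h2 _ _)) (tdeg_mul_le (h1 _) (h2 _ _))
  have : (GG f).totalDegree ≤ D + (D + D) := by
    rw [GG]
    exact tdeg_sub_le (tdeg_mul_le (h1 _) (h3 _)) (tdeg_mul_le (h1 _) (h3 _))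
  omega

lemma deriv_blue (b : K × K × K) (g : MvPolynomial (Fin 3) K) :
    Polynomial.derivative (blue b g) = blue b (pderiv 1 g) +
      Polynomial.C b.2.1 * blue b (pderiv 0 g) := by
  have := chain (blue b) Polynomial.derivative' g
  simp [Fin.sum_univ_three] at this
  rw [this]; ring

lemma blue_GG (b : K × K × K) (f : MvPolynomial (Fin 3) K) (hf : blue b f = 0) :
    blue b (GG f) = 0 := by
  have h0 := deriv_blue b f
  rw [hf] at h0
  simp at h0
  have h1 : blue b (pderiv 1 f) = - Polynomial.C b.2.1 * blue b (pderiv 0 f) := by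
    linear_combination - h0
  have h2 := deriv_blue b (pderiv 0 f)
  have h3 := deriv_blue b (pderiv 1 f)
  rw [h1] at h3
  simp only [neg_mul, map_neg, Polynomial.derivative_mul, Polynomial.derivative_C] at h3
  simp only [GG, DD_apply, map_sub, map_mul, h1]
  linear_combination ((blue b (pderiv 0 f))^2) * (h3 + Polynomial.C b.2.1 * h2)

end
end RPP

namespace RPP
open MvPolynomial
section
variable {K : Type*} [Field K]

lemma count_y (h : MvPolynomial (Fin 2) K) (hh : h ≠ 0) (N : ℕ) (hN : h.totalDegree ≤ N)
    (Y : Finset K)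
    (hY : ∀ y ∈ Y, aeval (R := K) ![Polynomial.X, Polynomial.C y] h = 0) : Y.card ≤ N := by
  classical
  set h' : MvPolynomial (Fin 2) K := rename (Equiv.swap 0 1) h with hh'
  have h0 : h' ≠ 0 := by
    rw [hh', Ne, map_eq_zero_iff _ (rename_injective _ (Equiv.injective _))]; exact hh
  set P := finSuccEquiv K 1 h' with hP
  have hP0 : P ≠ 0 := by
    rw [hP, Ne, map_eq_zero_iff _ (AlgEquiv.injective _)]; exact h0
  have hdeg : P.natDegree ≤ N := by
    rw [hP, natDegree_finSuccEquiv]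
    exact (degreeOf_le_totalDegree _ _).trans ((totalDegree_rename_le _ _).trans hN)
  have hr : (Y.image (fun y => (C y : MvPolynomial (Fin 1) K))).val ⊆ P.roots := by
    intro c hc
    simp only [Finset.mem_val, Finset.mem_image] at hc
    obtain ⟨y, hy, rfl⟩ := hc
    rw [Polynomial.mem_roots hP0, Polynomial.IsRoot]
    apply (uniqueAlgEquiv K (Fin 1)).injective
    rw [map_zero, ← hY y hy]
    have : (((uniqueAlgEquiv K (Fin 1)).toAlgHom.comp
      ((Polynomial.aeval (C y : MvPolynomial (Fin 1) K)).restrictScalars K)).comp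
        (finSuccEquiv K 1).toAlgHom).comp (rename (Equiv.swap 0 1))
        = aeval (R := K) ![Polynomial.X, Polynomial.C y] := by
      apply MvPolynomial.algHom_ext
      intro i
      fin_cases i
      · have : finSuccEquiv K 1 (X 1) = Polynomial.C (X 0) := finSuccEquiv_X_succ (j := 0)
        simp [this, uniqueAlgEquiv]
      · simp [finSuccEquiv_X_zero, uniqueAlgEquiv]
    rw [← this]
    simp [hP, hh']
  have := Polynomial.card_le_degree_of_subset_roots hr
  rw [Finset.card_image_of_injective _ (C_injective _ _)] at this
  exact this.trans hdeg

lemma tdeg_coeff (f : MvPolynomial (Fin 3) K) (i : ℕ) :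
    ((finSuccEquiv K 2 f).coeff i).totalDegree ≤ f.totalDegree := by
  by_cases h : (finSuccEquiv K 2 f).coeff i = 0
  · simp [h]
  · exact (Nat.le_add_right _ _).trans (totalDegree_coeff_finSuccEquiv_add_le f i h)

lemma tdeg_resultant (f g : Polynomial (MvPolynomial (Fin 2) K)) (m n D E : ℕ)
    (hf : ∀ i, (f.coeff i).totalDegree ≤ D) (hg : ∀ i, (g.coeff i).totalDegree ≤ E) :
    (Polynomial.resultant f g m n).totalDegree ≤ m * E + n * D := by
  rw [Polynomial.resultant, Matrix.det_apply]
  refine totalDegree_finsetSum_le ?_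
  intro σ _
  have h1 : (∏ i, Polynomial.sylvester f g m n (σ i) i).totalDegree ≤ m * E + n * D := by
    refine (totalDegree_finsetProd _ _).trans ?_
    rw [Fin.sum_univ_add]
    refine add_le_add ?_ ?_
    · refine (Finset.sum_le_card_nsmul _ _ E ?_).trans (by simp)
      intro i _
      simp only [Polynomial.sylvester, Matrix.of_apply, Fin.addCases_left]
      split_ifs
      · exact hg _
      · simp
    · refine (Finset.sum_le_card_nsmul _ _ D ?_).trans (by simp)
      intro i _
      simp only [Polynomial.sylvester, Matrix.of_apply, Fin.addCases_right]
      split_ifs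
      · exact hf _
      · simp
  rcases Int.units_eq_one_or (Equiv.Perm.sign σ) with h | h
  · rw [h, one_smul]; exact h1
  · rw [h]; simpa [Units.smul_def] using h1

lemma blue_rename (b : K × K × K) (h : MvPolynomial (Fin 2) K) :
    blue b (rename Fin.succ h) = aeval (R := K) ![Polynomial.X, Polynomial.C b.1] h := by
  rw [blue, aeval_rename]
  congr 2

lemma finSucc_rename (h : MvPolynomial (Fin 2) K) :
    finSuccEquiv K 2 (rename Fin.succ h) = Polynomial.C h := by
  induction h using MvPolynomial.induction_on with
  | C a => simp [finSuccEquiv_apply]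
  | add p q hp hq => simp [hp, hq]
  | mul_X p i hp => rw [map_mul, map_mul, hp, rename_X, finSuccEquiv_X_succ, Polynomial.C_mul]

lemma bezout (f G : MvPolynomial (Fin 3) K) (hf : Irreducible f) (hfG : ¬ f ∣ G) {D E : ℕ}
    (hD : f.totalDegree ≤ D) (hE : G.totalDegree ≤ E) (J : Finset (K × K × K))
    (hJ : Set.InjOn Prod.fst (J : Set (K × K × K))) (h1 : ∀ b ∈ J, blue b f = 0)
    (h2 : ∀ b ∈ J, blue b G = 0) : J.card ≤ 2 * D * E + D := by
  classical
  set f' := finSuccEquiv K 2 f with hf'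
  set G' := finSuccEquiv K 2 G with hG'
  have key : ∀ (h : MvPolynomial (Fin 2) K) (N : ℕ), h ≠ 0 → h.totalDegree ≤ N →
      (∀ b ∈ J, blue b (rename Fin.succ h) = 0) → J.card ≤ N := by
    intro h N h0 hN hv
    rw [← Finset.card_image_of_injOn hJ]
    refine count_y h h0 N hN _ ?_
    intro y hy
    obtain ⟨b, hb, rfl⟩ := Finset.mem_image.1 hy
    rw [← blue_rename]; exact hv b hb
  have hf0 : f' ≠ 0 := by
    rw [hf', Ne, map_eq_zero_iff _ (AlgEquiv.injective _)]; exact hf.ne_zero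
  by_cases hm : f'.natDegree = 0
  · rw [Polynomial.natDegree_eq_zero] at hm
    obtain ⟨c, hc⟩ := hm
    have hfc : f = rename Fin.succ c := by
      apply (finSuccEquiv K 2).injective
      rw [finSucc_rename, hc]
    have hc' : c = f'.coeff 0 := by rw [← hc]; simp
    have := key c D (by rintro rfl; simp at hc; exact hf0 hc.symm)
      (by rw [hc']; exact (tdeg_coeff f 0).trans hD) (by rw [← hfc]; exact h1)
    omega
  · have hirr : Irreducible f' := (MulEquiv.irreducible_iff (finSuccEquiv K 2)).2 hf
    have hprim := hirr.isPrimitive hm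
    have hndvd : ¬ f' ∣ G' := by
      rwa [hf', hG', map_dvd_iff]
    set R := MvPolynomial (Fin 2) K
    let _ : GCDMonoid R := UniqueFactorizationMonoid.toGCDMonoid R
    let L := FractionRing R
    have hirr2 := (hprim.irreducible_iff_irreducible_map_fraction_map (K := L)).1 hirr
    have hnd2 : ¬ f'.map (algebraMap R L) ∣ G'.map (algebraMap R L) := fun h =>
      hndvd (hprim.dvd_of_fraction_map_dvd_fraction_map h)
    have hcop := hirr2.coprime_iff_not_dvd.2 hnd2
    have hinj : Function.Injective (algebraMap R L) := IsFractionRing.injective R L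
    have hres : Polynomial.resultant f' G' ≠ 0 := by
      intro h0
      have := Polynomial.resultant_map_map f' G' f'.natDegree G'.natDegree (algebraMap R L)
      rw [h0, map_zero, ← Polynomial.natDegree_map_eq_of_injective hinj f',
        ← Polynomial.natDegree_map_eq_of_injective hinj G', Polynomial.resultant_eq_zero_iff] at this
      exact this.2 hcop
    obtain ⟨P, Q, -, -, hPQ⟩ := Polynomial.exists_mul_add_mul_eq_C_resultant f' G' le_rfl le_rfl
      (Or.inl hm)
    have hbl : ∀ b ∈ J, blue b (rename Fin.succ (Polynomial.resultant f' G')) = 0 := by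
      intro b hb
      have : rename Fin.succ (Polynomial.resultant f' G') =
        f * (finSuccEquiv K 2).symm P + G * (finSuccEquiv K 2).symm Q := by
        apply (finSuccEquiv K 2).injective
        rw [finSucc_rename, ← hPQ]; simp [hf', hG']
      rw [this]; simp [h1 b hb, h2 b hb]
    have hdeg := tdeg_resultant f' G' f'.natDegree G'.natDegree D E
      (fun i => (tdeg_coeff f i).trans hD) (fun i => (tdeg_coeff G i).trans hE)
    have e1 : f'.natDegree ≤ D := by
      rw [hf', natDegree_finSuccEquiv]; exact (degreeOf_le_totalDegree _ _).trans hD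
    have e2 : G'.natDegree ≤ E := by
      rw [hG', natDegree_finSuccEquiv]; exact (degreeOf_le_totalDegree _ _).trans hE
    have := key _ _ hres hdeg hbl
    nlinarith [Nat.mul_le_mul_right E e1, Nat.mul_le_mul_right D e2]
end
end RPP

namespace RPP
open MvPolynomial
section
variable {K : Type*} [Field K]

/-- coefficientwise extension of a derivation -/
noncomputable def cder (d : Derivation K (MvPolynomial (Fin 3) K) (MvPolynomial (Fin 3) K)) :
    Derivation K (Polynomial (MvPolynomial (Fin 3) K)) (Polynomial (MvPolynomial (Fin 3) K)) :=
  PolynomialModule.equivPolynomialSelf.compDer d.mapCoeffs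

lemma cder_coeff (d : Derivation K (MvPolynomial (Fin 3) K) (MvPolynomial (Fin 3) K))
    (p : Polynomial (MvPolynomial (Fin 3) K)) (i : ℕ) :
    (cder d p).coeff i = d (p.coeff i) := rfl

lemma cder_C (d : Derivation K (MvPolynomial (Fin 3) K) (MvPolynomial (Fin 3) K))
    (p : MvPolynomial (Fin 3) K) :
    cder d (Polynomial.C p) = Polynomial.C (d p) := by
  ext1 i
  rw [cder_coeff, Polynomial.coeff_C, Polynomial.coeff_C]
  split_ifs <;> simp

lemma cder_X (d : Derivation K (MvPolynomial (Fin 3) K) (MvPolynomial (Fin 3) K)) :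
    cder d Polynomial.X = 0 := by
  ext1 i
  rw [cder_coeff, Polynomial.coeff_X]
  split_ifs <;> simp

noncomputable def Psi (f : MvPolynomial (Fin 3) K) :
    MvPolynomial (Fin 3) K →ₐ[K] Polynomial (MvPolynomial (Fin 3) K) :=
  aeval ![Polynomial.C (X 0) - Polynomial.C (pderiv 1 f) * Polynomial.X,
    Polynomial.C (X 1) + Polynomial.C (pderiv 0 f) * Polynomial.X, Polynomial.C (X 2)]

lemma Psi_id (f g : MvPolynomial (Fin 3) K) :
    Polynomial.C (pderiv 0 f) * cder (DD f) (Psi f g) =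
      Polynomial.C (pderiv 0 f) * Polynomial.derivative (Psi f g) +
      Polynomial.X * (Polynomial.C (DD f (pderiv 0 f)) * Polynomial.derivative (Psi f g)
       + Polynomial.C (GG f) * Psi f (pderiv 0 g)) := by
  have h1 := chain (Psi f) (cder (DD f)) g
  have h2 := chain (Psi f) (Polynomial.derivative'.restrictScalars K) g
  have d0 : DD f (X 0) = - pderiv 1 f := by simp [DD_apply, pderiv_X]
  have d1 : DD f (X 1) = pderiv 0 f := by simp [DD_apply, pderiv_X]
  have d2 : DD f (X 2) = 0 := by simp [DD_apply, pderiv_X]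
  have p0 : Psi f (X 0) = Polynomial.C (X 0) - Polynomial.C (pderiv 1 f) * Polynomial.X := by
    simp [Psi]
  have p1 : Psi f (X 1) = Polynomial.C (X 1) + Polynomial.C (pderiv 0 f) * Polynomial.X := by
    simp [Psi]
  have p2 : Psi f (X 2) = Polynomial.C (X 2) := by
    simp [Psi]
  have h2' : Polynomial.derivative (Psi f g) =
      Psi f (pderiv 1 g) * Polynomial.C (pderiv 0 f) -
       Psi f (pderiv 0 g) * Polynomial.C (pderiv 1 f) := by
    change (Derivation.restrictScalars K Polynomial.derivative') ((Psi f) g) = _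
    rw [h2, Fin.sum_univ_three, p0, p1, p2]
    simp
    ring
  rw [Fin.sum_univ_three, p0, p1, p2] at h1
  simp only [map_sub, map_add, Derivation.leibniz, cder_C, cder_X, d0, d1, d2] at h1
  rw [h1, h2', GG]
  simp
  ring

lemma flec (f : MvPolynomial (Fin 3) K) (hf : Prime f) (hu : ¬ f ∣ pderiv 0 f)
    (hG : f ∣ GG f) {D : ℕ} (hD : f.totalDegree ≤ D) (hch : ∀ j : ℕ, 1 ≤ j → j ≤ D → (j : K) ≠ 0)
    (j : ℕ) : f ∣ (Psi f f).coeff j := by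
  have hdeg : (Psi f f).natDegree ≤ D := by
    apply natDegree_aeval_le f hD
    intro i
    fin_cases i
    · simp only [Fin.isValue, Fin.zero_eta, Matrix.cons_val_zero]
      exact (Polynomial.natDegree_sub_le _ _).trans (max_le (by simp)
        ((Polynomial.natDegree_C_mul_le _ _).trans Polynomial.natDegree_X_le))
    · simp only [Fin.isValue, Fin.mk_one, Matrix.cons_val_one, Matrix.cons_val_zero]
      exact (Polynomial.natDegree_add_le _ _).trans (max_le (by simp)
        ((Polynomial.natDegree_C_mul_le _ _).trans Polynomial.natDegree_X_le))
    · simp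
  induction j with
  | zero =>
    have : (Psi f f).coeff 0 = f := by
      rw [Polynomial.coeff_zero_eq_eval_zero, ← Polynomial.coe_aeval_eq_eval]
      have : ((Polynomial.aeval (0 : MvPolynomial (Fin 3) K)).restrictScalars K).comp (Psi f) =
        AlgHom.id K _ := by
        apply MvPolynomial.algHom_ext
        intro i
        fin_cases i <;> simp [Psi]
      exact congrArg (fun φ => φ f) this
    rw [this]
  | succ j ih =>
    by_cases hj : j + 1 ≤ D
    · have hid := congrArg (fun q => q.coeff j) (Psi_id f f)
      have hDf : DD f f = 0 := by rw [DD_apply]; ring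
      have hdc : f ∣ DD f ((Psi f f).coeff j) := by
        obtain ⟨q, hq⟩ := ih
        rw [hq, Derivation.leibniz, hDf]; simp
      simp only [Polynomial.coeff_add, Polynomial.coeff_C_mul, cder_coeff,
        Polynomial.coeff_derivative] at hid
      have hX : f ∣ (Polynomial.X * (Polynomial.C (DD f (pderiv 0 f)) *
          Polynomial.derivative (Psi f f)
           + Polynomial.C (GG f) * Psi f (pderiv 0 f))).coeff j := by
        cases j with
        | zero => simp
        | succ i =>
          rw [Polynomial.coeff_X_mul, Polynomial.coeff_add, Polynomial.coeff_C_mul,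
            Polynomial.coeff_C_mul, Polynomial.coeff_derivative]
          exact dvd_add (dvd_mul_of_dvd_right (dvd_mul_of_dvd_left ih _) _)
            (dvd_mul_of_dvd_left hG _)
      have h3 : f ∣ pderiv 0 f * ((Psi f f).coeff (j+1) * ((j : MvPolynomial (Fin 3) K) + 1)) := by
        rw [← sub_eq_of_eq_add hid]
        exact dvd_sub (dvd_mul_of_dvd_right hdc _) hX
      have h4 := (hf.dvd_or_dvd h3).resolve_left hu
      have hun : IsUnit ((j : MvPolynomial (Fin 3) K) + 1) := by
        have : ((j : MvPolynomial (Fin 3) K) + 1) = C ((j + 1 : ℕ) : K) := by simp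
        rw [this]
        exact (hch (j+1) (by omega) hj).isUnit.map C
      exact (hun.dvd_mul_right).1 h4
    · rw [Polynomial.coeff_eq_zero_of_natDegree_lt (by omega)]; exact dvd_zero _
end
end RPP

namespace RPP
open MvPolynomial
section
universe uK
variable {K : Type uK} [Field K]

lemma exists_pi (f : MvPolynomial (Fin 3) K) (hf : Prime f) :
    ∃ (L : Type uK) (_ : Field L) (_ : Algebra K L) (π : MvPolynomial (Fin 3) K →ₐ[K] L),
      ∀ g, π g = 0 ↔ f ∣ g := by
  have hp : (Ideal.span {f}).IsPrime := (Ideal.span_singleton_prime hf.ne_zero).2 hf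
  refine ⟨FractionRing (MvPolynomial (Fin 3) K ⧸ Ideal.span {f}), inferInstance, inferInstance,
    (IsScalarTower.toAlgHom K (MvPolynomial (Fin 3) K ⧸ Ideal.span {f}) _).comp
      (Ideal.Quotient.mkₐ K (Ideal.span {f})), ?_⟩
  intro g
  simp only [AlgHom.comp_apply, Ideal.Quotient.mkₐ_eq_mk, IsScalarTower.coe_toAlgHom',
    FaithfulSMul.algebraMap_eq_zero_iff, Ideal.Quotient.eq_zero_iff_mem, Ideal.mem_span_singleton]

lemma red_W (f : MvPolynomial (Fin 3) K) (hf : Prime f) (hu : ¬ f ∣ pderiv 0 f)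
    (hflec : ∀ j, f ∣ (Psi f f).coeff j) (r : K × K × K) (hr : red r f = 0)
    (hru : red r (pderiv 0 f) ≠ 0) :
    f ∣ pderiv 0 f * (X 0 - (C r.2.1 * X 2 + C r.2.2)) - pderiv 1 f * (C r.1 - X 1) := by
  obtain ⟨L, _, _, π, hπ⟩ := exists_pi f hf
  have hpu : π (pderiv 0 f) ≠ 0 := by rwa [Ne, hπ]
  set τ : L := (algebraMap K L r.1 - π (X 1)) / π (pderiv 0 f) with hτ
  set φ : MvPolynomial (Fin 3) K →ₐ[K] L :=
    aeval ![π (X 0) - π (pderiv 1 f) * τ, algebraMap K L r.1, π (X 2)] with hφ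
  have pC : ∀ a, π (C a) = algebraMap K L a := fun a => π.commutes a
  have hφf : φ f = 0 := by
    have : ((Polynomial.aeval τ).restrictScalars K).comp ((Polynomial.mapAlgHom π).comp (Psi f))
        = φ := by
      apply MvPolynomial.algHom_ext
      intro i
      fin_cases i
      · simp [Psi, hφ]
      · simp [Psi, hφ, hτ]; field_simp; ring
      · simp [Psi, hφ]
    rw [← this]
    simp only [AlgHom.comp_apply, AlgHom.restrictScalars_apply, Polynomial.coe_mapAlgHom]
    have : Polynomial.map (π : MvPolynomial (Fin 3) K →+* L) (Psi f f) = 0 := by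
      ext i
      simpa [hπ] using hflec i
    rw [this, map_zero]
  set ρ : MvPolynomial (Fin 3) K →ₐ[K] MvPolynomial (Fin 3) K :=
    aeval ![X 0, C r.1, X 2] with hρ
  set ρ2 : MvPolynomial (Fin 3) K →ₐ[K] MvPolynomial (Fin 3) K :=
    aeval ![C r.2.1 * X 2 + C r.2.2, C r.1, X 2] with hρ2
  set ℓ : MvPolynomial (Fin 3) K := X 0 - (C r.2.1 * X 2 + C r.2.2) with hℓ
  have hdiv : ℓ ∣ ρ f - ρ2 f := by
    rw [← Ideal.mem_span_singleton, ← Ideal.Quotient.eq]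
    have : (Ideal.Quotient.mkₐ K (Ideal.span {ℓ})).comp ρ =
        (Ideal.Quotient.mkₐ K (Ideal.span {ℓ})).comp ρ2 := by
      apply MvPolynomial.algHom_ext
      intro i
      fin_cases i
      · simp only [AlgHom.comp_apply, Ideal.Quotient.mkₐ_eq_mk, Ideal.Quotient.eq,
          Ideal.mem_span_singleton]
        simp [hρ, hρ2, hℓ]
      · simp [hρ, hρ2]
      · simp [hρ, hρ2]
    exact congrArg (fun φ => φ f) this
  have hρtwo : ρ2 f = 0 := by
    have : (Polynomial.aeval (X 2 : MvPolynomial (Fin 3) K)).comp (red r) = ρ2 := by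
      apply MvPolynomial.algHom_ext
      intro i
      fin_cases i <;> simp [hρ2, MvPolynomial.algebraMap_eq]
    rw [← this]; simp [hr]
  rw [hρtwo, sub_zero] at hdiv
  obtain ⟨q, hq⟩ := hdiv
  have hredl : red r ℓ = 0 := by simp [hℓ]
  have hredq : red r q = red r (pderiv 0 f) := by
    have h1 := chain ρ (pderiv 0) f
    have h1 : pderiv 0 (ρ f) = ρ (pderiv 0 f) := by
      rw [h1]
      simp [Fin.sum_univ_three, hρ, pderiv_X]
    have h2 : red r (ρ (pderiv 0 f)) = red r (pderiv 0 f) := by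
      have : (red r).comp ρ = red r := by
        apply MvPolynomial.algHom_ext
        intro i
        fin_cases i <;> simp [hρ]
      exact congrArg (fun φ => φ (pderiv 0 f)) this
    rw [← h2, ← h1, hq, Derivation.leibniz]
    have : pderiv 0 ℓ = 1 := by simp [hℓ, pderiv_X]
    simp [this, hredl]
  have hφρ : φ (ρ f) = 0 := by
    rw [← hφf]
    have : φ.comp ρ = φ := by
      apply MvPolynomial.algHom_ext
      intro i
      fin_cases i <;> simp [hρ, hφ]
    exact congrArg (fun φ => φ f) this
  rw [hq, map_mul, mul_eq_zero] at hφρ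
  rcases hφρ with h | h
  · rw [← hπ]
    have h' : π (X 0) - π (pderiv 1 f) * τ - (algebraMap K L r.2.1 * π (X 2) + algebraMap K L r.2.2)
        = 0 := by
      simpa [hℓ, hφ] using h
    simp only [hℓ, map_sub, map_mul, map_add, pC]
    rw [hτ] at h'
    field_simp at h'
    linear_combination h'
  · exfalso
    have clear : ∀ g : MvPolynomial (Fin 3) K, ∃ (e : ℕ) (Q : MvPolynomial (Fin 3) K),
        π Q = (π (pderiv 0 f)) ^ e * φ g ∧ red r Q = (red r (pderiv 0 f)) ^ e * red r g := by
      intro g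
      induction g using MvPolynomial.induction_on with
      | C a => exact ⟨0, C a, by simp [pC, hφ], by simp⟩
      | add p q hp hq =>
        obtain ⟨e1, Q1, h1, h2⟩ := hp
        obtain ⟨e2, Q2, h3, h4⟩ := hq
        refine ⟨e1 + e2, pderiv 0 f ^ e2 * Q1 + pderiv 0 f ^ e1 * Q2, ?_, ?_⟩
        · simp only [map_add, map_mul, map_pow, h1, h3]; ring
        · simp only [map_add, map_mul, map_pow, h2, h4]; ring
      | mul_X p i hp =>
        obtain ⟨e, Q, h1, h2⟩ := hp
        have : ∃ (e : ℕ) (Q : MvPolynomial (Fin 3) K),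
            π Q = (π (pderiv 0 f)) ^ e * φ (X i) ∧
              red r Q = (red r (pderiv 0 f)) ^ e * red r (X i) := by
          fin_cases i
          · refine ⟨1, pderiv 0 f * X 0 - pderiv 1 f * (C r.1 - X 1), ?_, ?_⟩
            · simp [hφ, pC, hτ]; field_simp
            · simp
          · exact ⟨0, C r.1, by simp [hφ, pC], by simp⟩
          · exact ⟨0, X 2, by simp [hφ], by simp⟩
        obtain ⟨e', Q', h3, h4⟩ := this
        refine ⟨e + e', Q * Q', ?_, ?_⟩
        · simp only [map_mul, h1, h3]; ring
        · simp only [map_mul, h2, h4]; ring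
    obtain ⟨e, Q, h1, h2⟩ := clear q
    rw [h, mul_zero, hπ] at h1
    obtain ⟨w, hw⟩ := h1
    rw [hw, map_mul, hr, zero_mul, hredq] at h2
    have := mul_ne_zero (pow_ne_zero e hru) hru
    exact this h2.symm

lemma collinear_red (f : MvPolynomial (Fin 3) K) (hf : Prime f) (hu : ¬ f ∣ pderiv 0 f)
    (hflec : ∀ j, f ∣ (Psi f f).coeff j) (r1 r2 r : K × K × K) (hr1 : red r1 f = 0)
    (hru1 : red r1 (pderiv 0 f) ≠ 0) (hr2 : red r2 f = 0)
    (hru2 : red r2 (pderiv 0 f) ≠ 0) (hr : red r f = 0) :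
    (r2.1 - r1.1) * r.2.1 = (r2.1 - r.1) * r1.2.1 + (r.1 - r1.1) * r2.2.1 ∧
    (r2.1 - r1.1) * r.2.2 = (r2.1 - r.1) * r1.2.2 + (r.1 - r1.1) * r2.2.2 := by
  have w1 := red_W f hf hu hflec r1 hr1 hru1
  have w2 := red_W f hf hu hflec r2 hr2 hru2
  have w3 := dvd_sub (dvd_mul_of_dvd_right w1 (C r2.1 - X 1)) (dvd_mul_of_dvd_right w2 (C r1.1 - X 1))
  have e : (C r2.1 - X 1) * (pderiv 0 f * (X 0 - (C r1.2.1 * X 2 + C r1.2.2)) - pderiv 1 f * (C r1.1 - X 1)) -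
     (C r1.1 - X 1) * (pderiv 0 f * (X 0 - (C r2.2.1 * X 2 + C r2.2.2)) - pderiv 1 f * (C r2.1 - X 1))
     = pderiv 0 f * ((C r2.1 - X 1) * (X 0 - (C r1.2.1 * X 2 + C r1.2.2)) -
      (C r1.1 - X 1) * (X 0 - (C r2.2.1 * X 2 + C r2.2.2))) := by ring
  rw [e] at w3
  obtain ⟨w, hw⟩ := (hf.dvd_or_dvd w3).resolve_left hu
  have h := congrArg (red r) hw
  rw [map_mul, hr, zero_mul] at h
  simp only [map_sub, map_mul, map_add, red_X0, red_X1, red_X2, red_C] at h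
  have h0 := congrArg (fun q => q.eval 0) h
  have h1 := congrArg (fun q => q.eval 1) h
  simp at h0 h1
  constructor
  · linear_combination h1 - h0
  · linear_combination h0
end
end RPP

namespace RPP
open MvPolynomial
section
variable {K : Type*} [Field K]

lemma exists_factors (F : MvPolynomial (Fin 3) K) : F ≠ 0 →
    ∃ S : Finset (MvPolynomial (Fin 3) K), (∀ f ∈ S, Irreducible f) ∧
      (∀ f ∈ S, ∀ g ∈ S, f ∣ g → f = g) ∧ (∑ f ∈ S, f.totalDegree) ≤ F.totalDegree ∧
      (∀ φ : MvPolynomial (Fin 3) K →ₐ[K] Polynomial K, φ F = 0 → ∃ f ∈ S, φ f = 0) := by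
  classical
  induction F using WfDvdMonoid.induction_on_irreducible with
  | zero => intro h; exact absurd rfl h
  | unit u hu =>
    intro _
    refine ⟨∅, by simp, by simp, by simp, ?_⟩
    intro φ hφ
    exact absurd hφ (hu.map φ).ne_zero
  | mul a i ha hi ih =>
    intro _
    obtain ⟨S, h1, h2, h3, h4⟩ := ih ha
    have hdeg : (i * a).totalDegree = i.totalDegree + a.totalDegree :=
      totalDegree_mul_of_isDomain hi.ne_zero ha
    by_cases hex : ∃ f ∈ S, Associated i f
    · obtain ⟨f, hf, hif⟩ := hex
      refine ⟨S, h1, h2, by omega, ?_⟩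
      intro φ hφ
      rw [map_mul, mul_eq_zero] at hφ
      rcases hφ with h | h
      · refine ⟨f, hf, ?_⟩
        obtain ⟨c, hc⟩ := hif.dvd
        rw [hc, map_mul, h, zero_mul]
      · exact h4 φ h
    · push Not at hex
      have hiS : i ∉ S := fun h => hex i h (Associated.refl _)
      refine ⟨insert i S, ?_, ?_, ?_, ?_⟩
      · intro f hf
        rcases Finset.mem_insert.1 hf with rfl | h
        · exact hi
        · exact h1 f h
      · intro f hf g hg hfg
        rcases Finset.mem_insert.1 hf with rfl | h
        · rcases Finset.mem_insert.1 hg with rfl | h'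
          · rfl
          · exact absurd (hi.associated_of_dvd (h1 g h') hfg) (hex g h')
        · rcases Finset.mem_insert.1 hg with rfl | h'
          · exact absurd ((h1 f h).associated_of_dvd hi hfg).symm (hex f h)
          · exact h2 f h g h' hfg
      · rw [Finset.sum_insert hiS]; omega
      · intro φ hφ
        rw [map_mul, mul_eq_zero] at hφ
        rcases hφ with h | h
        · exact ⟨i, Finset.mem_insert_self _ _, h⟩
        · obtain ⟨f, hf, h⟩ := h4 φ h
          exact ⟨f, Finset.mem_insert_of_mem hf, h⟩

lemma finSucc_pderiv (f : MvPolynomial (Fin 3) K) :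
    finSuccEquiv K 2 (pderiv 0 f) = Polynomial.derivative (finSuccEquiv K 2 f) := by
  have := chain (finSuccEquiv K 2).toAlgHom (Polynomial.derivative'.restrictScalars K) f
  have e1 : finSuccEquiv K 2 (X 1) = Polynomial.C (X 0) := finSuccEquiv_X_succ (j := 0)
  have e2 : finSuccEquiv K 2 (X 2) = Polynomial.C (X 1) := finSuccEquiv_X_succ (j := 1)
  change Polynomial.derivative (finSuccEquiv K 2 f) = _ at this
  rw [this, Fin.sum_univ_three]
  simp [finSuccEquiv_X_zero, e1, e2]

lemma bezout0 (f : MvPolynomial (Fin 3) K) (hf0 : f ≠ 0) (hfu : f ∣ pderiv 0 f) {D : ℕ}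
    (hD : f.totalDegree ≤ D) (hch : ∀ j : ℕ, 1 ≤ j → j ≤ D → (j : K) ≠ 0)
    (J : Finset (K × K × K))
    (hJ : Set.InjOn Prod.fst (J : Set (K × K × K))) (h1 : ∀ b ∈ J, blue b f = 0) :
    J.card ≤ D := by
  classical
  set f' := finSuccEquiv K 2 f with hf'
  have hf0 : f' ≠ 0 := by
    rw [hf', Ne, map_eq_zero_iff _ (AlgEquiv.injective _)]; exact hf0
  have hn : f'.natDegree ≤ D := by
    rw [hf', natDegree_finSuccEquiv]; exact (degreeOf_le_totalDegree _ _).trans hD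
  have hm : f'.natDegree = 0 := by
    by_contra hne
    have hdv : f' ∣ Polynomial.derivative f' := by
      rw [hf', ← finSucc_pderiv, map_dvd_iff]; exact hfu
    have hz : Polynomial.derivative f' = 0 :=
      Polynomial.eq_zero_of_dvd_of_natDegree_lt hdv (Polynomial.natDegree_derivative_lt hne)
    have hc := congrArg (fun q => q.coeff (f'.natDegree - 1)) hz
    simp only [Polynomial.coeff_derivative, Polynomial.coeff_zero] at hc
    have e : f'.natDegree - 1 + 1 = f'.natDegree := by omega
    rw [e, mul_eq_zero] at hc
    rcases hc with h | h
    · exact hf0 (Polynomial.leadingCoeff_eq_zero.1 h)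
    · have h' : ((f'.natDegree : ℕ) : K) = 0 := by
        apply C_injective (Fin 2) K
        rw [map_natCast, map_zero, ← h, ← Nat.cast_succ, Nat.succ_eq_add_one, e]
      exact hch _ (by omega) hn h'
  rw [Polynomial.natDegree_eq_zero] at hm
  obtain ⟨c, hc⟩ := hm
  have hfc : f = rename Fin.succ c := by
    apply (finSuccEquiv K 2).injective
    rw [finSucc_rename, hc]
  have hc' : c = f'.coeff 0 := by rw [← hc]; simp
  rw [← Finset.card_image_of_injOn hJ]
  refine count_y c (by rintro rfl; simp at hc; exact hf0 hc.symm) D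
    (by rw [hc']; exact (tdeg_coeff f 0).trans hD) _ ?_
  intro y hy
  obtain ⟨b, hb, rfl⟩ := Finset.mem_image.1 hy
  rw [← blue_rename, ← hfc]; exact h1 b hb

def Inc (r b : K × K × K) : Prop := r.2.1 * b.1 + r.2.2 = b.2.1 * r.1 + b.2.2

lemma roots_le (b : K × K × K) (g : MvPolynomial (Fin 3) K) (hg : blue b g ≠ 0)
    (T : Finset (K × K × K)) (hT : Set.InjOn Prod.fst (T : Set (K × K × K)))
    (h1 : ∀ r ∈ T, Inc r b) (h2 : ∀ r ∈ T, red r g = 0) : T.card ≤ g.totalDegree := by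
  classical
  refine le_trans ?_ (natDegree_blue b g)
  rw [← Finset.card_image_of_injOn hT]
  apply Polynomial.card_le_degree_of_subset_roots
  intro x hx
  simp only [Finset.mem_val, Finset.mem_image] at hx
  obtain ⟨r, hr, rfl⟩ := hx
  rw [Polynomial.mem_roots hg, Polynomial.IsRoot, ← eval_red_eq_eval_blue r b (h1 r hr), h2 r hr]
  simp

def Col (r1 r2 r : K × K × K) : Prop :=
    (r2.1 - r1.1) * r.2.1 = (r2.1 - r.1) * r1.2.1 + (r.1 - r1.1) * r2.2.1 ∧
    (r2.1 - r1.1) * r.2.2 = (r2.1 - r.1) * r1.2.2 + (r.1 - r1.1) * r2.2.2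


set_option maxHeartbeats 4000000 in
open Classical in
lemma core (R : Finset (K × K × K)) (hR : Set.InjOn Prod.fst (R : Set (K × K × K))) (k : ℕ)
    (hk1 : 1 ≤ k)
    (hk : ∀ r1 ∈ R, ∀ r2 ∈ R, r1.1 ≠ r2.1 → (R.filter (Col r1 r2)).card ≤ k)
    (F : MvPolynomial (Fin 3) K) (hF : F ≠ 0) {d : ℕ} (hd : F.totalDegree ≤ d)
    (hch : ∀ j : ℕ, 1 ≤ j → j ≤ d → (j : K) ≠ 0) (hRF : ∀ r ∈ R, red r F = 0)
    (Bl : Finset (K × K × K)) (hBl : Set.InjOn Prod.fst (Bl : Set (K × K × K)))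
    (hrich : ∀ b ∈ Bl, 2 * d + k < (R.filter (fun r => Inc r b)).card) :
    Bl.card ≤ 10 * d ^ 2 + 4 * d := by
  obtain ⟨S, hirr, hdist, hsum, hvan⟩ := exists_factors F hF
  have hsum' : ∑ f ∈ S, f.totalDegree ≤ d := hsum.trans hd
  have hle : ∀ f ∈ S, f.totalDegree ≤ d := fun f hf =>
    (Finset.single_le_sum (f := fun f => f.totalDegree) (fun _ _ => Nat.zero_le _) hf).trans hsum'
  set G : MvPolynomial (Fin 3) K → MvPolynomial (Fin 3) K := fun f => ∏ g ∈ S.erase f, g with hG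
  have hGdeg : ∀ f, (G f).totalDegree ≤ d := by
    intro f
    refine (totalDegree_finsetProd _ _).trans (le_trans ?_ hsum')
    exact Finset.sum_le_sum_of_subset (Finset.erase_subset _ _)
  have hGnd : ∀ f ∈ S, ¬ f ∣ G f := by
    intro f hf h
    rw [hG, (hirr f hf).prime.dvd_finsetProd_iff] at h
    obtain ⟨g, hg, hfg⟩ := h
    exact (Finset.mem_erase.1 hg).1 (hdist f hf g (Finset.mem_erase.1 hg).2 hfg).symm
  set bad : MvPolynomial (Fin 3) K → Finset (K × K × K) := fun f =>
    Bl.filter (fun b => blue b f = 0 ∧ (¬ f ∣ GG f ∨ f ∣ pderiv 0 f ∨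
      (¬ f ∣ pderiv 0 f ∧ blue b (pderiv 0 f) = 0) ∨ blue b (G f) = 0)) with hbad
  have hbadcard : ∀ f ∈ S, (bad f).card ≤ 10 * d * f.totalDegree + 4 * f.totalDegree := by
    intro f hf
    set D := f.totalDegree with hDdef
    have hDd := hle f hf
    have sub : ∀ J : Finset (K × K × K), J ⊆ Bl → Set.InjOn Prod.fst (J : Set (K × K × K)) :=
      fun J hJ => hBl.mono (by exact_mod_cast hJ)
    have c1 : (Bl.filter (fun b => blue b f = 0 ∧ ¬ f ∣ GG f)).card ≤ 2 * D * (3 * D) + D := by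
      by_cases h : f ∣ GG f
      · simp [h]
      · refine bezout f (GG f) (hirr f hf) h le_rfl (tdeg_GG f) _ (sub _ (Finset.filter_subset _ _)) ?_ ?_
        · intro b hb; exact (Finset.mem_filter.1 hb).2.1
        · intro b hb; exact blue_GG b f (Finset.mem_filter.1 hb).2.1
    have c2 : (Bl.filter (fun b => blue b f = 0 ∧ f ∣ pderiv 0 f)).card ≤ D := by
      by_cases h : f ∣ pderiv 0 f
      · refine bezout0 f (hirr f hf).ne_zero h le_rfl (fun j h1 h2 => hch j h1 (h2.trans hDd))
          _ (sub _ (Finset.filter_subset _ _)) ?_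
        intro b hb; exact (Finset.mem_filter.1 hb).2.1
      · simp [h]
    have c3 : (Bl.filter (fun b => blue b f = 0 ∧
        (¬ f ∣ pderiv 0 f ∧ blue b (pderiv 0 f) = 0))).card ≤ 2 * D * D + D := by
      by_cases h : f ∣ pderiv 0 f
      · simp [h]
      · refine bezout f _ (hirr f hf) h le_rfl (tdeg_pderiv 0 f) _ (sub _ (Finset.filter_subset _ _)) ?_ ?_
        · intro b hb; exact (Finset.mem_filter.1 hb).2.1
        · intro b hb; exact (Finset.mem_filter.1 hb).2.2.2
    have c4 : (Bl.filter (fun b => blue b f = 0 ∧ blue b (G f) = 0)).card ≤ 2 * D * d + D := by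
      refine bezout f _ (hirr f hf) (hGnd f hf) le_rfl (hGdeg f) _ (sub _ (Finset.filter_subset _ _)) ?_ ?_
      · intro b hb; exact (Finset.mem_filter.1 hb).2.1
      · intro b hb; exact (Finset.mem_filter.1 hb).2.2
    have : bad f ⊆ (Bl.filter (fun b => blue b f = 0 ∧ ¬ f ∣ GG f)) ∪
        ((Bl.filter (fun b => blue b f = 0 ∧ f ∣ pderiv 0 f)) ∪
        ((Bl.filter (fun b => blue b f = 0 ∧
        (¬ f ∣ pderiv 0 f ∧ blue b (pderiv 0 f) = 0))) ∪
        (Bl.filter (fun b => blue b f = 0 ∧ blue b (G f) = 0)))) := by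
      intro b hb
      obtain ⟨hb1, hb2, hb3⟩ := Finset.mem_filter.1 hb
      rcases hb3 with h | h | h | h
      · exact Finset.mem_union_left _ (Finset.mem_filter.2 ⟨hb1, hb2, h⟩)
      · exact Finset.mem_union_right _ (Finset.mem_union_left _ (Finset.mem_filter.2 ⟨hb1, hb2, h⟩))
      · exact Finset.mem_union_right _ (Finset.mem_union_right _ (Finset.mem_union_left _
          (Finset.mem_filter.2 ⟨hb1, hb2, h⟩)))
      · exact Finset.mem_union_right _ (Finset.mem_union_right _ (Finset.mem_union_right _
          (Finset.mem_filter.2 ⟨hb1, hb2, h⟩)))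
    have h5 := (Finset.card_le_card this).trans ((Finset.card_union_le _ _).trans
      (Nat.add_le_add_left ((Finset.card_union_le _ _).trans (Nat.add_le_add_left
        (Finset.card_union_le _ _) _)) _))
    have hDD : D * D ≤ d * D := Nat.mul_le_mul_right _ hDd
    nlinarith
  have hcover : Bl ⊆ S.biUnion bad := by
    intro b hb
    by_contra hnb
    simp only [Finset.mem_biUnion, not_exists, not_and] at hnb
    have hIinj : ∀ J : Finset (K × K × K), J ⊆ R → Set.InjOn Prod.fst (J : Set (K × K × K)) :=
      fun J hJ => hR.mono (by exact_mod_cast hJ)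
    have hbF : blue b F = 0 := by
      by_contra hne
      have := roots_le b F hne (R.filter (fun r => Inc r b)) (hIinj _ (Finset.filter_subset _ _))
        (fun r hr => (Finset.mem_filter.1 hr).2) (fun r hr => hRF r (Finset.mem_filter.1 hr).1)
      have := hrich b hb
      omega
    obtain ⟨f, hf, hbf⟩ := hvan _ hbF
    have hnf := hnb f hf
    simp only [hbad, Finset.mem_filter, not_and, not_or, not_not] at hnf
    obtain ⟨n1, n2, n3, n4⟩ := hnf hb hbf
    have n3 := n3 n2
    have hflec := flec f (hirr f hf).prime n2 n1 (hle f hf) hch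
    have s1 : (R.filter (fun r => Inc r b ∧ red r (G f) = 0)).card ≤ d :=
      (roots_le b (G f) n4 _ (hIinj _ (Finset.filter_subset _ _)) (fun r hr => (Finset.mem_filter.1 hr).2.1)
        (fun r hr => (Finset.mem_filter.1 hr).2.2)).trans (hGdeg f)
    have s2 : (R.filter (fun r => Inc r b ∧ red r (pderiv 0 f) = 0)).card ≤ d :=
      (roots_le b _ n3 _ (hIinj _ (Finset.filter_subset _ _)) (fun r hr => (Finset.mem_filter.1 hr).2.1)
        (fun r hr => (Finset.mem_filter.1 hr).2.2)).trans ((tdeg_pderiv 0 f).trans (hle f hf))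
    have s3 : (R.filter (fun r => red r f = 0 ∧ red r (pderiv 0 f) ≠ 0)).card ≤ k := by
      by_contra hlt
      push Not at hlt
      obtain ⟨r1, hr1, r2, hr2, hne⟩ := Finset.one_lt_card.1 (lt_of_le_of_lt hk1 hlt)
      have hr1' := Finset.mem_filter.1 hr1
      have hr2' := Finset.mem_filter.1 hr2
      have hx : r1.1 ≠ r2.1 := fun h => hne (hR hr1'.1 hr2'.1 h)
      have := hk r1 hr1'.1 r2 hr2'.1 hx
      have hsub : (R.filter (fun r => red r f = 0 ∧ red r (pderiv 0 f) ≠ 0)) ⊆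
          R.filter (Col r1 r2) := by
        intro r hr
        have hr' := Finset.mem_filter.1 hr
        refine Finset.mem_filter.2 ⟨hr'.1, ?_⟩
        exact collinear_red f (hirr f hf).prime n2 hflec r1 r2 r hr1'.2.1 hr1'.2.2 hr2'.2.1
          hr2'.2.2 hr'.2.1
      have := Finset.card_le_card hsub
      omega
    have hsub : R.filter (fun r => Inc r b) ⊆ (R.filter (fun r => Inc r b ∧ red r (G f) = 0)) ∪
        ((R.filter (fun r => Inc r b ∧ red r (pderiv 0 f) = 0)) ∪
        (R.filter (fun r => red r f = 0 ∧ red r (pderiv 0 f) ≠ 0))) := by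
      intro r hr
      obtain ⟨hrR, hrb⟩ := Finset.mem_filter.1 hr
      obtain ⟨g, hg, hrg⟩ := hvan _ (hRF r hrR)
      by_cases hgf : g = f
      · rw [hgf] at hrg
        apply Finset.mem_union_right
        by_cases hz : red r (pderiv 0 f) = 0
        · exact Finset.mem_union_left _ (Finset.mem_filter.2 ⟨hrR, hrb, hz⟩)
        · exact Finset.mem_union_right _ (Finset.mem_filter.2 ⟨hrR, hrg, hz⟩)
      · apply Finset.mem_union_left
        refine Finset.mem_filter.2 ⟨hrR, hrb, ?_⟩
        rw [hG, map_prod]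
        exact Finset.prod_eq_zero (Finset.mem_erase.2 ⟨hgf, hg⟩) hrg
    have h5 := (Finset.card_le_card hsub).trans ((Finset.card_union_le _ _).trans
      (Nat.add_le_add_left (Finset.card_union_le _ _) _))
    have := hrich b hb
    omega
  calc Bl.card ≤ (S.biUnion bad).card := Finset.card_le_card hcover
    _ ≤ ∑ f ∈ S, (bad f).card := Finset.card_biUnion_le
    _ ≤ ∑ f ∈ S, (10 * d * f.totalDegree + 4 * f.totalDegree) := Finset.sum_le_sum hbadcard
    _ = (10 * d + 4) * ∑ f ∈ S, f.totalDegree := by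
        rw [Finset.mul_sum]; exact Finset.sum_congr rfl (fun _ _ => by ring)
    _ ≤ (10 * d + 4) * d := Nat.mul_le_mul_left _ hsum'
    _ = _ := by ring
end
end RPP

namespace RPP
open MvPolynomial
section
variable {K : Type*} [Field K]

lemma exists_F (R : Finset (K × K × K)) (e : ℕ) (he : 3 * R.card < e ^ 2) :
    ∃ F : MvPolynomial (Fin 3) K, F ≠ 0 ∧ F.totalDegree ≤ 3 * e ∧ ∀ r ∈ R, red r F = 0 := by
  classical
  have he0 : 0 < e := by
    rcases Nat.eq_zero_or_pos e with h | h
    · subst h; simp at he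
    · exact h
  let mon : (Fin 3 → Fin e) → (Fin 3 →₀ ℕ) := fun i => Finsupp.equivFunOnFinite.symm (fun t => (i t : ℕ))
  have hmon : Function.Injective mon := by
    intro i j h
    funext t
    have := congrArg (fun q => q t) h
    exact Fin.ext (by simpa [mon] using this)
  let T : ((Fin 3 → Fin e) → K) →ₗ[K] MvPolynomial (Fin 3) K :=
    ∑ i, (monomial (mon i)).comp (LinearMap.proj i)
  have hT : ∀ c, T c = ∑ i, monomial (mon i) (c i) := by
    intro c; simp [T]
  have hTdeg : ∀ c, (T c).totalDegree ≤ 3 * e - 1 := by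
    intro c
    rw [hT]
    refine totalDegree_finsetSum_le ?_
    intro i _
    refine (totalDegree_monomial_le _ _).trans ?_
    have : ((mon i).sum fun _ => id) = ∑ t, (i t : ℕ) := by
      rw [Finsupp.sum_fintype _ _ (fun _ => rfl)]; simp [mon]
    rw [this, Fin.sum_univ_three]
    have := (i 0).2; have := (i 1).2; have := (i 2).2
    omega
  let L : ((Fin 3 → Fin e) → K) →ₗ[K] (R × Fin (3 * e) → K) :=
    LinearMap.pi (fun q => (Polynomial.lcoeff K q.2).comp ((red q.1.1).toLinearMap.comp T))
  have hker : LinearMap.ker L ≠ ⊥ := by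
    apply LinearMap.ker_ne_bot_of_finrank_lt
    simp only [Module.finrank_fintype_fun_eq_card, Fintype.card_prod, Fintype.card_coe,
      Fintype.card_fin, Fintype.card_pi, Finset.prod_const, Finset.card_univ]
    nlinarith
  obtain ⟨c, hc, hc0⟩ := Submodule.exists_mem_ne_zero_of_ne_bot hker
  refine ⟨T c, ?_, (hTdeg c).trans (by omega), ?_⟩
  · intro h0
    apply hc0
    funext i
    have := congrArg (coeff (mon i)) h0
    rw [hT, coeff_sum, Finset.sum_eq_single i] at this
    · simpa using this
    · intro j _ hj
      rw [coeff_monomial, if_neg (fun h => hj (hmon h))]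
    · simp
  · intro r hr
    ext n
    by_cases hn : n < 3 * e
    · have := congrFun (LinearMap.mem_ker.1 hc) (⟨r, hr⟩, ⟨n, hn⟩)
      simpa [L] using this
    · rw [Polynomial.coeff_eq_zero_of_natDegree_lt]
      · simp
      · have := (natDegree_red r (T c)).trans (hTdeg c)
        omega

open Classical in
lemma core2 (R : Finset (K × K × K)) (hR : Set.InjOn Prod.fst (R : Set (K × K × K))) (k : ℕ)
    (hk1 : 1 ≤ k)
    (hk : ∀ r1 ∈ R, ∀ r2 ∈ R, r1.1 ≠ r2.1 → (R.filter (Col r1 r2)).card ≤ k)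
    (e : ℕ) (he : 3 * R.card < e ^ 2)
    (hch : ∀ j : ℕ, 1 ≤ j → j ≤ 3 * e → (j : K) ≠ 0)
    (Bl : Finset (K × K × K)) (hBl : Set.InjOn Prod.fst (Bl : Set (K × K × K)))
    (hrich : ∀ b ∈ Bl, 6 * e + k < (R.filter (fun r => Inc r b)).card) :
    Bl.card ≤ 102 * e ^ 2 := by
  obtain ⟨F, hF, hd, hRF⟩ := exists_F R e he
  have := core R hR k hk1 hk F hF hd hch hRF Bl hBl (fun b hb => by
    have := hrich b hb; omega)
  have h1 : e ≤ e ^ 2 := Nat.le_self_pow (by norm_num) e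
  nlinarith

def lam (τ : K) (r : K × K × K) : K := 1 - τ ^ 3 * r.2.1 - τ ^ 4 * r.2.2
def mu (τ : K) (b : K × K × K) : K := 1 - τ ^ 2 * b.2.1 - τ ^ 4 * b.2.2
def nx (τ : K) (r : K × K × K) : K := r.1 - τ * r.2.1 - τ ^ 2 * r.2.2
def ny (τ : K) (b : K × K × K) : K := b.1 - τ * b.2.1 - τ ^ 3 * b.2.2
def tr (τ : K) (r : K × K × K) : K × K × K :=
  (nx τ r / lam τ r, r.2.1 / lam τ r, r.2.2 / lam τ r)
def tb (τ : K) (b : K × K × K) : K × K × K :=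
  (ny τ b / mu τ b, b.2.1 / mu τ b, b.2.2 / mu τ b)

lemma inc_iff (τ : K) (r b : K × K × K) (h1 : lam τ r ≠ 0) (h2 : mu τ b ≠ 0) :
    Inc (tr τ r) (tb τ b) ↔ Inc r b := by
  simp only [Inc, tr, tb]
  rw [div_mul_div_comm, div_mul_div_comm, div_add_div _ _ (mul_ne_zero h1 h2) h1,
    div_add_div _ _ (mul_ne_zero h2 h1) h2, div_eq_div_iff (by positivity) (by positivity)]
  have key : (r.2.1 * ny τ b * lam τ r + lam τ r * mu τ b * r.2.2) * (mu τ b * lam τ r * mu τ b) -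
      (b.2.1 * nx τ r * mu τ b + mu τ b * lam τ r * b.2.2) * (lam τ r * mu τ b * lam τ r) =
      (lam τ r * mu τ b) ^ 2 * (r.2.1 * b.1 + r.2.2 - (b.2.1 * r.1 + b.2.2)) := by
    simp only [lam, mu, nx, ny]; ring
  rw [← sub_eq_zero, key, mul_eq_zero, ← sub_eq_zero (a := r.2.1 * b.1 + r.2.2)]
  constructor
  · rintro (h | h)
    · exact absurd h (pow_ne_zero _ (mul_ne_zero h1 h2))
    · exact h
  · exact Or.inr

lemma col_tr (τ : K) (r1 r2 r : K × K × K) (h1 : lam τ r1 ≠ 0) (h2 : lam τ r2 ≠ 0)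
    (h3 : lam τ r ≠ 0) (hx : (tr τ r1).1 ≠ (tr τ r2).1) (hc : Col (tr τ r1) (tr τ r2) (tr τ r)) :
    ∃ c : K, r = r1 + c • (r2 - r1) := by
  obtain ⟨ha, hb⟩ := hc
  set x1 := (tr τ r1).1 with hx1
  set x2 := (tr τ r2).1 with hx2
  set x := (tr τ r).1 with hx0
  have hxx : x2 - x1 ≠ 0 := sub_ne_zero.2 (Ne.symm hx)
  have e1 : nx τ r1 = x1 * lam τ r1 := by simp [hx1, tr, h1]
  have e2 : nx τ r2 = x2 * lam τ r2 := by simp [hx2, tr, h2]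
  have e3 : nx τ r = x * lam τ r := by simp [hx0, tr, h3]
  simp only [tr] at ha hb
  set c1 := lam τ r * ((x2 - x) / (x2 - x1)) / lam τ r1 with hc1
  set c2 := lam τ r * ((x - x1) / (x2 - x1)) / lam τ r2 with hc2
  have A : r.2.1 = c1 * r1.2.1 + c2 * r2.2.1 := by
    rw [hc1, hc2]; field_simp at ha ⊢; linear_combination ha
  have B : r.2.2 = c1 * r1.2.2 + c2 * r2.2.2 := by
    rw [hc1, hc2]; field_simp at hb ⊢; linear_combination hb
  have L0 : lam τ r = c1 * lam τ r1 + c2 * lam τ r2 := by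
    rw [hc1, hc2]; field_simp; ring
  have X0 : nx τ r = c1 * nx τ r1 + c2 * nx τ r2 := by
    rw [e1, e2, e3, hc1, hc2]; field_simp; ring
  have hs : 1 = c1 + c2 := by
    simp only [lam] at L0
    linear_combination L0 + τ ^ 3 * A + τ ^ 4 * B
  have hX : r.1 = c1 * r1.1 + c2 * r2.1 := by
    simp only [nx] at X0
    linear_combination X0 + τ * A + τ ^ 2 * B
  have hs' : c1 = 1 - c2 := by linear_combination - hs
  refine ⟨c2, ?_⟩
  ext
  · simp; rw [hX, hs']; ring
  · simp; rw [A, hs']; ring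
  · simp; rw [B, hs']; ring

lemma poly_ne (f : Polynomial K) (a b c : K) (n : ℕ) (H : Polynomial K)
    (h : f = Polynomial.C a - Polynomial.X * (Polynomial.C b + Polynomial.X ^ n * (Polynomial.C c + Polynomial.X * H)))
    (hne : ¬ (a = 0 ∧ b = 0 ∧ c = 0)) (hn : 1 ≤ n) : f ≠ 0 := by
  intro h0
  rw [h0] at h
  have ha : a = 0 := by
    have := congrArg (fun q => q.eval 0) h
    simpa using this.symm
  rw [ha, Polynomial.C_0, zero_sub, eq_comm, neg_eq_zero, mul_eq_zero] at h
  have h := h.resolve_left Polynomial.X_ne_zero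
  have hb : b = 0 := by
    have := congrArg (fun q => q.eval 0) h
    have hn' : n ≠ 0 := by omega
    simpa [hn'] using this
  rw [hb, Polynomial.C_0, zero_add, mul_eq_zero] at h
  have h := h.resolve_left (pow_ne_zero _ Polynomial.X_ne_zero)
  have hc : c = 0 := by
    have := congrArg (fun q => q.eval 0) h
    simpa using this
  exact hne ⟨ha, hb, hc⟩

lemma exists_tau [Infinite K] (P Q : Finset (K × K × K)) :
    ∃ τ : K, (∀ r ∈ P, lam τ r ≠ 0) ∧ (∀ b ∈ Q, mu τ b ≠ 0) ∧
      (∀ r ∈ P, ∀ r' ∈ P, r ≠ r' → nx τ r * lam τ r' ≠ nx τ r' * lam τ r) ∧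
      (∀ r ∈ Q, ∀ r' ∈ Q, r ≠ r' → ny τ r * mu τ r' ≠ ny τ r' * mu τ r) := by
  classical
  let X : Polynomial K := Polynomial.X
  let Cc : K →+* Polynomial K := Polynomial.C
  let pl : K × K × K → Polynomial K := fun r => 1 - X ^ 3 * Cc r.2.1 - X ^ 4 * Cc r.2.2
  let pm : K × K × K → Polynomial K := fun r => 1 - X ^ 2 * Cc r.2.1 - X ^ 4 * Cc r.2.2
  let px : K × K × K → Polynomial K := fun r => Cc r.1 - X * Cc r.2.1 - X ^ 2 * Cc r.2.2
  let py : K × K × K → Polynomial K := fun r => Cc r.1 - X * Cc r.2.1 - X ^ 3 * Cc r.2.2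
  have el : ∀ τ r, (pl r).eval τ = lam τ r := by intro τ r; simp [pl, lam, X, Cc]; ring
  have em : ∀ τ r, (pm r).eval τ = mu τ r := by intro τ r; simp [pm, mu, X, Cc]; ring
  have ex : ∀ τ r, (px r).eval τ = nx τ r := by intro τ r; simp [px, nx, X, Cc]; ring
  have ey : ∀ τ r, (py r).eval τ = ny τ r := by intro τ r; simp [py, ny, X, Cc]; ring
  let W : Polynomial K := (∏ r ∈ P, pl r) * (∏ r ∈ Q, pm r) *
    (∏ q ∈ P.offDiag, (px q.1 * pl q.2 - px q.2 * pl q.1)) *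
    (∏ q ∈ Q.offDiag, (py q.1 * pm q.2 - py q.2 * pm q.1))
  have hW : W ≠ 0 := by
    refine mul_ne_zero (mul_ne_zero (mul_ne_zero ?_ ?_) ?_) ?_
    · refine Finset.prod_ne_zero_iff.2 (fun r _ h => ?_)
      have := el 0 r
      rw [h] at this
      simp [lam] at this
    · refine Finset.prod_ne_zero_iff.2 (fun r _ h => ?_)
      have := em 0 r
      rw [h] at this
      simp [mu] at this
    · refine Finset.prod_ne_zero_iff.2 (fun q hq => ?_)
      have hq' := (Finset.mem_offDiag.1 hq).2.2
      refine poly_ne _ (q.1.1 - q.2.1) (q.1.2.1 - q.2.2.1) (q.1.2.2 - q.2.2.2) 1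
        (px q.1 * (Cc q.2.2.1 + X * Cc q.2.2.2) - px q.2 * (Cc q.1.2.1 + X * Cc q.1.2.2)) ?_ ?_ le_rfl
      · simp only [px, pl, X, Cc, Polynomial.C_sub]; ring
      · rintro ⟨h1, h2, h3⟩
        exact hq' (Prod.ext (sub_eq_zero.1 h1) (Prod.ext (sub_eq_zero.1 h2) (sub_eq_zero.1 h3)))
    · refine Finset.prod_ne_zero_iff.2 (fun q hq => ?_)
      have hq' := (Finset.mem_offDiag.1 hq).2.2
      by_cases h12 : q.1.1 = q.2.1 ∧ q.1.2.1 = q.2.2.1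
      · obtain ⟨h1, h2⟩ := h12
        refine poly_ne _ (q.1.1 - q.2.1) (q.1.2.1 - q.2.2.1) (q.1.2.2 - q.2.2.2) 2
          (Cc q.1.1 * (Cc q.2.2.2 - Cc q.1.2.2) - X * (Cc q.1.2.1 * (Cc q.2.2.2 - Cc q.1.2.2))
            - X * (Cc q.1.2.2 * Cc q.1.2.1 - Cc q.2.2.2 * Cc q.1.2.1)) ?_ ?_ (by norm_num)
        · simp only [py, pm, X, Cc, Polynomial.C_sub, h1, h2]; ring
        · rintro ⟨h1, h2, h3⟩
          exact hq' (Prod.ext (sub_eq_zero.1 h1) (Prod.ext (sub_eq_zero.1 h2) (sub_eq_zero.1 h3)))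
      · refine poly_ne _ (q.1.1 - q.2.1) (q.1.2.1 - q.2.2.1) (q.1.1 * q.2.2.1 - q.2.1 * q.1.2.1) 1
          ((Cc q.1.2.2 - Cc q.2.2.2) + X * (Cc q.1.1 * Cc q.2.2.2 - Cc q.2.1 * Cc q.1.2.2)
           - X ^ 2 * (Cc q.1.2.1 * Cc q.2.2.2 - Cc q.2.2.1 * Cc q.1.2.2)
           - X ^ 2 * (Cc q.1.2.2 * Cc q.2.2.1 - Cc q.2.2.2 * Cc q.1.2.1)) ?_ ?_ le_rfl
        · simp only [py, pm, X, Cc, Polynomial.C_sub, Polynomial.C_mul]; ring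
        · rintro ⟨h1, h2, -⟩
          exact h12 ⟨sub_eq_zero.1 h1, sub_eq_zero.1 h2⟩
  obtain ⟨τ, hτ⟩ : ∃ τ, W.eval τ ≠ 0 := by
    by_contra hcon
    push Not at hcon
    exact hW (Polynomial.funext (fun t => by rw [hcon t]; simp))
  simp only [W, Polynomial.eval_mul, Polynomial.eval_prod, Polynomial.eval_sub, el, em, ex, ey] at hτ
  have h1 := left_ne_zero_of_mul (left_ne_zero_of_mul (left_ne_zero_of_mul hτ))
  have h2 := right_ne_zero_of_mul (left_ne_zero_of_mul (left_ne_zero_of_mul hτ))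
  have h3 := right_ne_zero_of_mul (left_ne_zero_of_mul hτ)
  have h4 := right_ne_zero_of_mul hτ
  rw [Finset.prod_ne_zero_iff] at h1 h2 h3 h4
  refine ⟨τ, h1, h2, ?_, ?_⟩
  · intro r hr r' hr' hne
    exact sub_ne_zero.1 (h3 (r, r') (Finset.mem_offDiag.2 ⟨hr, hr', hne⟩))
  · intro r hr r' hr' hne
    exact sub_ne_zero.1 (h4 (r, r') (Finset.mem_offDiag.2 ⟨hr, hr', hne⟩))

open Classical in
lemma rich_planes [Infinite K] (P : Finset (K × K × K)) (k : ℕ)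
    (hk1 : 1 ≤ k)
    (hk : ∀ r1 ∈ P, ∀ r2 ∈ P, r1 ≠ r2 →
      (P.filter (fun r => ∃ c : K, r = r1 + c • (r2 - r1))).card ≤ k)
    (e : ℕ) (he : 3 * P.card < e ^ 2)
    (hch : ∀ j : ℕ, 1 ≤ j → j ≤ 3 * e → (j : K) ≠ 0)
    (Q : Finset (K × K × K))
    (hrich : ∀ b ∈ Q, 6 * e + k < (P.filter (fun r => Inc r b)).card) :
    Q.card ≤ 102 * e ^ 2 := by
  obtain ⟨τ, hl, hm, hx, hy⟩ := exists_tau P Q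
  have injx : ∀ r ∈ P, ∀ r' ∈ P, (tr τ r).1 = (tr τ r').1 → r = r' := by
    intro r hr r' hr' h
    by_contra hne
    apply hx r hr r' hr' hne
    simp only [tr] at h
    rwa [div_eq_div_iff (hl r hr) (hl r' hr')] at h
  have injy : ∀ r ∈ Q, ∀ r' ∈ Q, (tb τ r).1 = (tb τ r').1 → r = r' := by
    intro r hr r' hr' h
    by_contra hne
    apply hy r hr r' hr' hne
    simp only [tb] at h
    rwa [div_eq_div_iff (hm r hr) (hm r' hr')] at h
  have injP : Set.InjOn (tr τ) (P : Set (K × K × K)) := fun r hr r' hr' h =>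
    injx r hr r' hr' (by rw [h])
  have injQ : Set.InjOn (tb τ) (Q : Set (K × K × K)) := fun r hr r' hr' h =>
    injy r hr r' hr' (by rw [h])
  rw [← Finset.card_image_of_injOn injQ]
  apply core2 (P.image (tr τ)) ?_ k hk1 ?_ e ?_ hch _ ?_ ?_
  · intro a ha b hb hab
    simp only [Finset.coe_image, Set.mem_image] at ha hb
    obtain ⟨r, hr, rfl⟩ := ha
    obtain ⟨r', hr', rfl⟩ := hb
    rw [injx r hr r' hr' hab]
  · intro a ha b hb hab
    obtain ⟨r1, hr1, rfl⟩ := Finset.mem_image.1 ha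
    obtain ⟨r2, hr2, rfl⟩ := Finset.mem_image.1 hb
    refine le_trans ?_ (hk r1 hr1 r2 hr2 (by rintro rfl; exact hab rfl))
    refine le_trans (Finset.card_le_card ?_) (Finset.card_image_le (f := tr τ))
    intro c hc
    obtain ⟨hc1, hc2⟩ := Finset.mem_filter.1 hc
    obtain ⟨r, hr, rfl⟩ := Finset.mem_image.1 hc1
    exact Finset.mem_image.2 ⟨r, Finset.mem_filter.2 ⟨hr,
      col_tr τ r1 r2 r (hl r1 hr1) (hl r2 hr2) (hl r hr) hab hc2⟩, rfl⟩
  · rw [Finset.card_image_of_injOn injP]; exact he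
  · intro a ha b hb hab
    simp only [Finset.coe_image, Set.mem_image] at ha hb
    obtain ⟨r, hr, rfl⟩ := ha
    obtain ⟨r', hr', rfl⟩ := hb
    rw [injy r hr r' hr' hab]
  · intro b hb
    obtain ⟨b, hb', rfl⟩ := Finset.mem_image.1 hb
    clear hb
    rename' hb' => hb
    refine lt_of_lt_of_le (hrich b hb) ?_
    rw [← Finset.card_image_of_injOn (injP.mono (by
      exact_mod_cast Finset.filter_subset (fun r => Inc r b) P))]
    refine Finset.card_le_card ?_
    intro c hc
    obtain ⟨r, hr, rfl⟩ := Finset.mem_image.1 hc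
    obtain ⟨hr1, hr2⟩ := Finset.mem_filter.1 hr
    exact Finset.mem_filter.2 ⟨Finset.mem_image_of_mem _ hr1,
      (inc_iff τ r b (hl r hr1) (hm b hb)).2 hr2⟩

end
end RPP

namespace RPP
section
variable {K : Type*} [Field K]

open Classical in
noncomputable def II (P Q : Finset (K × K × K)) : ℕ :=
  ∑ b ∈ Q, (P.filter (fun r => Inc r b)).card

def LineLe (P : Finset (K × K × K)) (k : ℕ) : Prop :=
  ∀ r1 ∈ P, ∀ r2 ∈ P, r1 ≠ r2 → ∀ T ⊆ P, (∀ r ∈ T, ∃ c : K, r = r1 + c • (r2 - r1)) → T.card ≤ k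

lemma II_split (Q : Finset (K × K × K)) (k N M : ℕ)
    (h : ∀ P : Finset (K × K × K), LineLe P k → P.card ≤ N → II P Q ≤ M)
    (P : Finset (K × K × K)) (hP : LineLe P k) (hc : P.card ≤ 2 * N) : II P Q ≤ 2 * M := by
  classical
  obtain ⟨P1, hP1, hP1c⟩ := Finset.exists_subset_card_eq (s := P) (n := min N P.card) (min_le_right _ _)
  have hmono : ∀ P' ⊆ P, LineLe P' k := by
    intro P' h' r1 h1 r2 h2 hne T hT
    exact hP r1 (h' h1) r2 (h' h2) hne T (hT.trans h')
  have a1 := h P1 (hmono _ hP1) (by omega)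
  have a2 := h (P \ P1) (hmono _ Finset.sdiff_subset) (by
    rw [Finset.card_sdiff_of_subset hP1]; omega)
  have : II P Q ≤ II P1 Q + II (P \ P1) Q := by
    unfold II
    rw [← Finset.sum_add_distrib]
    refine Finset.sum_le_sum (fun b _ => ?_)
    refine le_trans (Finset.card_le_card ?_) (Finset.card_union_le _ _)
    intro r hr
    obtain ⟨h1, h2⟩ := Finset.mem_filter.1 hr
    by_cases h3 : r ∈ P1
    · exact Finset.mem_union_left _ (Finset.mem_filter.2 ⟨h3, h2⟩)
    · exact Finset.mem_union_right _ (Finset.mem_filter.2 ⟨Finset.mem_sdiff.2 ⟨h1, h3⟩, h2⟩)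
  omega

lemma incidence [Infinite K] (k : ℕ) (hk1 : 1 ≤ k) (i : ℕ)
    (hch : ∀ j : ℕ, 1 ≤ j → j ≤ 6 * 2 ^ i → (j : K) ≠ 0) :
    ∀ P Q : Finset (K × K × K), LineLe P k → P.card ≤ 4 ^ i →
      II P Q ≤ (12 * 2 ^ i + k) * (Q.card + 1632 * i * 4 ^ i) := by
  classical
  induction i with
  | zero =>
    intro P Q _ hP
    unfold II
    have : ∑ b ∈ Q, (P.filter (fun r => Inc r b)).card ≤ ∑ b ∈ Q, 1 := by
      refine Finset.sum_le_sum (fun b _ => ?_)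
      exact (Finset.card_filter_le _ _).trans (by simpa using hP)
    simp at this ⊢
    nlinarith
  | succ i ih =>
    have ih := ih (fun j h1 h2 => hch j h1 (h2.trans (by rw [pow_succ]; omega)))
    intro P Q hP hPc
    set Q1 := Q.filter (fun b => 6 * (2 * 2 ^ (i+1)) + k < (P.filter (fun r => Inc r b)).card) with hQ1
    have hQ1c : Q1.card ≤ 102 * (2 * 2 ^ (i+1)) ^ 2 := by
      apply rich_planes P k hk1 ?_ (2 * 2 ^ (i+1)) ?_ ?_ Q1
      · intro b hb; exact (Finset.mem_filter.1 hb).2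
      · intro r1 h1 r2 h2 hne
        exact hP r1 h1 r2 h2 hne _ (Finset.filter_subset _ _) (fun r hr => (Finset.mem_filter.1 hr).2)
      · have e : (2 * 2 ^ (i+1)) ^ 2 = 4 * 4 ^ (i+1) := by
          rw [mul_pow, ← pow_mul, mul_comm (i+1) 2, pow_mul]; norm_num
        rw [e]
        have : 0 < 4 ^ (i+1) := by positivity
        omega
      · intro j h1 h2; exact hch j h1 (by omega)
    have hI1 : II P Q1 ≤ 2 * (2 * ((12 * 2 ^ i + k) * (Q1.card + 1632 * i * 4 ^ i))) := by
      refine II_split Q1 k (2 * 4 ^ i) _ ?_ P hP (by rw [pow_succ] at hPc; omega)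
      intro P' h1 h2
      exact II_split Q1 k (4 ^ i) _ (fun P'' h3 h4 => ih P'' Q1 h3 h4) P' h1 h2
    have hI : II P Q ≤ II P Q1 + Q.card * (12 * 2 ^ (i+1) + k) := by
      unfold II
      rw [hQ1, ← Finset.sum_filter_add_sum_filter_not Q
        (fun b => 6 * (2 * 2 ^ (i+1)) + k < (P.filter (fun r => Inc r b)).card)]
      refine Nat.add_le_add_left ?_ _
      refine (Finset.sum_le_card_nsmul _ _ (12 * 2 ^ (i+1) + k) ?_).trans ?_
      · intro b hb
        have := (Finset.mem_filter.1 hb).2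
        omega
      · rw [smul_eq_mul]
        exact Nat.mul_le_mul_right _ (Finset.card_filter_le _ _)
    have e4 : (2 * 2 ^ (i+1)) ^ 2 = 16 * 4 ^ i := by
      have h : (4:ℕ) ^ i = (2 ^ i) ^ 2 := by
        rw [← pow_mul, mul_comm i 2, pow_mul]; norm_num
      rw [h]; ring
    rw [e4] at hQ1c
    have hR : 12 * 2 ^ i + k ≤ 12 * 2 ^ (i+1) + k := by rw [pow_succ]; omega
    set R := 12 * 2 ^ (i+1) + k with hRdef
    set R0 := 12 * 2 ^ i + k
    set N := 4 ^ i with hN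
    have e5 : 4 ^ (i+1) = 4 * N := by rw [pow_succ]; ring
    rw [e5]
    calc II P Q ≤ 2 * (2 * (R0 * (Q1.card + 1632 * i * N))) + Q.card * R := by omega
      _ ≤ 2 * (2 * (R * (102 * (16 * N) + 1632 * i * N))) + Q.card * R := by gcongr
      _ = R * (Q.card + 1632 * (i+1) * (4 * N)) := by ring
end
end RPP

namespace RPP
section
variable {p : ℕ} [Fact p.Prime]

/-- The triples `(a, b, s)` as points of the algebraic closure. -/
noncomputable def emb (u : ZMod p × ZMod p × ZMod p) :
    AlgebraicClosure (ZMod p) × AlgebraicClosure (ZMod p) × AlgebraicClosure (ZMod p) :=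
  (algebraMap _ _ u.2.2, algebraMap _ _ u.1, algebraMap _ _ (u.1 * u.2.1))

lemma emb_inj (u v : ZMod p × ZMod p × ZMod p) (hu : u.1 ≠ 0) (h : emb u = emb v) : u = v := by
  obtain ⟨a, b, s⟩ := u
  obtain ⟨a', b', s'⟩ := v
  have hi := (algebraMap (ZMod p) (AlgebraicClosure (ZMod p))).injective
  simp only [emb, Prod.mk.injEq] at h
  obtain ⟨h1, h2, h3⟩ := h
  have h1 := hi h1
  have h2 := hi h2
  have h3 := hi h3
  subst h1 h2
  have := mul_left_cancel₀ hu h3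
  subst this
  rfl

lemma emb_inc (u v : ZMod p × ZMod p × ZMod p) :
    Inc (emb u) (emb v) ↔ u.1 * (v.2.2 + u.2.1) = v.1 * (u.2.2 + v.2.1) := by
  have hi := (algebraMap (ZMod p) (AlgebraicClosure (ZMod p))).injective
  unfold Inc emb
  simp only [← map_mul, ← map_add]
  rw [hi.eq_iff, mul_add, mul_add]

lemma emb_line (A B S : Finset (ZMod p)) (hA : 0 ∉ A) (k : ℕ) (h1 : A.card ≤ k) (h2 : B.card ≤ k)
    (h3 : S.card ≤ k) [DecidableEq (AlgebraicClosure (ZMod p))] :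
    LineLe ((A ×ˢ B ×ˢ S).image emb) k := by
  have hi := (algebraMap (ZMod p) (AlgebraicClosure (ZMod p))).injective
  intro r1 hr1 r2 hr2 hne T hT hl
  have hT' : ∀ r ∈ T, ∃ u : ZMod p × ZMod p × ZMod p, u ∈ A ×ˢ B ×ˢ S ∧ emb u = r := by
    intro r hr
    simpa only [Finset.mem_image] using hT hr
  choose! g hg using hT'
  have key : ∀ (F : AlgebraicClosure (ZMod p) × AlgebraicClosure (ZMod p) × AlgebraicClosure (ZMod p) → AlgebraicClosure (ZMod p)),
      (∀ c : AlgebraicClosure (ZMod p), F (r1 + c • (r2 - r1)) = F r1 + c * (F r2 - F r1)) →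
      F r1 ≠ F r2 → ∀ r ∈ T, ∀ r' ∈ T, F r = F r' → r = r' := by
    intro F hF hF' r hr r' hr' h
    obtain ⟨c, hc⟩ := hl r hr
    obtain ⟨c', hc'⟩ := hl r' hr'
    rw [hc, hc', hF, hF] at h
    have : c = c' := mul_right_cancel₀ (sub_ne_zero.2 hF'.symm) (add_left_cancel h)
    rw [hc, hc', this]
  by_cases e1 : r1.1 = r2.1
  · by_cases e2 : r1.2.1 = r2.2.1
    · have e3 : r1.2.2 ≠ r2.2.2 := fun e3 => hne (Prod.ext e1 (Prod.ext e2 e3))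
      refine le_trans (Finset.card_le_card_of_injOn (fun r => (g r).2.1) ?_ ?_) h2
      · intro r hr
        have := (hg r hr).1
        simp only [Finset.mem_product] at this
        exact this.2.1
      · intro r hr r' hr' h
        refine key (fun r => r.2.2) (fun c => rfl) e3 r hr r' hr' ?_
        have ha : r.2.1 = r'.2.1 := by
          obtain ⟨c, hc⟩ := hl r hr
          obtain ⟨c', hc'⟩ := hl r' hr'
          rw [hc, hc']
          simp [e2]
        rw [← (hg r hr).2, ← (hg r' hr').2] at ha ⊢
        simp only [emb] at ha ⊢
        have ha := hi ha
        simp only at h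
        rw [h, ha]
    · refine le_trans (Finset.card_le_card_of_injOn (fun r => (g r).1) ?_ ?_) h1
      · intro r hr
        have := (hg r hr).1
        simp only [Finset.mem_product] at this
        exact this.1
      · intro r hr r' hr' h
        refine key (fun r => r.2.1) (fun c => rfl) e2 r hr r' hr' ?_
        rw [← (hg r hr).2, ← (hg r' hr').2]
        simp only [emb]
        simp only at h
        rw [h]
  · refine le_trans (Finset.card_le_card_of_injOn (fun r => (g r).2.2) ?_ ?_) h3
    · intro r hr
      have := (hg r hr).1
      simp only [Finset.mem_product] at this
      exact this.2.2
    · intro r hr r' hr' h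
      refine key (fun r => r.1) (fun c => rfl) e1 r hr r' hr' ?_
      rw [← (hg r hr).2, ← (hg r' hr').2]
      simp only [emb]
      simp only at h
      rw [h]

/-- number of solutions of the equation between dilated sums -/
def QQ (A B S : Finset (ZMod p)) : ℕ :=
  (((A ×ˢ B ×ˢ S) ×ˢ (A ×ˢ B ×ˢ S)).filter
    (fun z => z.1.1 * (z.1.2.2 + z.1.2.1) = z.2.1 * (z.2.2.2 + z.2.2.1))).card

lemma QQ_le (A B S : Finset (ZMod p)) (hA : 0 ∉ A) (k : ℕ) (hk : 1 ≤ k) (h1 : A.card ≤ k)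
    (h2 : B.card ≤ k) (h3 : S.card ≤ k) (i : ℕ) (hi : A.card * B.card * S.card ≤ 4 ^ i)
    (hp : 6 * 2 ^ i < p) :
    QQ A B S ≤ (12 * 2 ^ i + k) * (A.card * B.card * S.card + 1632 * i * 4 ^ i) := by
  classical
  set T := A ×ˢ B ×ˢ S with hT
  have hTA : ∀ u ∈ T, u.1 ≠ 0 := by
    intro u hu h0
    rw [hT, Finset.mem_product] at hu
    exact hA (h0 ▸ hu.1)
  have hinj : Set.InjOn emb (T : Set (ZMod p × ZMod p × ZMod p)) :=
    fun u hu v _ h => emb_inj u v (hTA u hu) h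
  have hTc : T.card = A.card * B.card * S.card := by
    rw [hT, Finset.card_product, Finset.card_product, mul_assoc]
  have hPc : (T.image emb).card = T.card := Finset.card_image_of_injOn hinj
  have main := incidence (K := AlgebraicClosure (ZMod p)) k hk i ?_ (T.image emb) (T.image emb)
    (emb_line A B S hA k h1 h2 h3) (by rw [hPc, hTc]; exact hi)
  · rw [hPc, hTc] at main
    refine le_trans ?_ main
    unfold II
    rw [Finset.sum_image hinj]
    have e : ∀ v ∈ T, ((T.image emb).filter (fun r => Inc r (emb v))).card
        = (T.filter (fun u => u.1 * (v.2.2 + u.2.1) = v.1 * (u.2.2 + v.2.1))).card := by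
      intro v _
      rw [Finset.filter_image, Finset.card_image_of_injOn]
      · simp only [emb_inc]
      · exact hinj.mono (by intro x hx; exact (Finset.mem_filter.1 hx).1)
    rw [Finset.sum_congr rfl e, ← Finset.card_sigma]
    unfold QQ
    refine Finset.card_le_card_of_injOn
      (fun z => (⟨(z.2.1, z.2.2.1, z.1.2.2), (z.1.1, z.1.2.1, z.2.2.2)⟩ :
        (_ : ZMod p × ZMod p × ZMod p) × (ZMod p × ZMod p × ZMod p))) ?_ ?_
    · rintro ⟨⟨a, b, s⟩, ⟨a', b', s'⟩⟩ h
      simp only [hT, Finset.coe_filter, Finset.mem_product, Set.mem_setOf_eq, Finset.coe_sigma,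
        Set.mem_sigma_iff, Finset.mem_coe, Finset.mem_filter] at h ⊢
      exact ⟨⟨h.1.2.1, h.1.2.2.1, h.1.1.2.2⟩, ⟨h.1.1.1, h.1.1.2.1, h.1.2.2.2⟩, h.2⟩
    · rintro ⟨⟨a, b, s⟩, ⟨a', b', s'⟩⟩ _ ⟨⟨c, d, e⟩, ⟨c', d', e'⟩⟩ _ h
      simp only [Sigma.mk.injEq, Prod.mk.injEq, heq_eq_eq] at h ⊢
      tauto
  · intro j hj1 hj2 h0
    have h0' : ((j : ℕ) : AlgebraicClosure (ZMod p)) = algebraMap (ZMod p) _ (j : ZMod p) := by simp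
    rw [h0', map_eq_zero, ZMod.natCast_eq_zero_iff] at h0
    have := Nat.le_of_dvd hj1 h0
    omega
end
end RPP

namespace RPP
section

lemma sum_fiber_sq {α β : Type*} [DecidableEq β] [DecidableEq α] (T : Finset α) (f : α → β) (C : Finset β) :
    ∑ c ∈ C, (T.filter (fun u => f u = c)).card ^ 2 ≤
      ((T ×ˢ T).filter (fun z => f z.1 = f z.2)).card := by
  have e : ∀ c ∈ C, (T.filter (fun u => f u = c)).card ^ 2
      = (((T ×ˢ T).filter (fun z => f z.1 = f z.2)).filter (fun z => f z.1 = c)).card := by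
    intro c _
    rw [sq, ← Finset.card_product]
    congr 1
    ext ⟨u, v⟩
    simp only [Finset.mem_product, Finset.mem_filter]
    constructor
    · rintro ⟨⟨h1, h2⟩, h3, h4⟩; exact ⟨⟨⟨h1, h3⟩, h2.trans h4.symm⟩, h2⟩
    · rintro ⟨⟨⟨h1, h3⟩, h2⟩, h4⟩; exact ⟨⟨h1, h4⟩, h3, h2 ▸ h4⟩
  rw [Finset.sum_congr rfl e]
  rw [← Finset.card_sigma]
  refine Finset.card_le_card_of_injOn (fun z => z.2) ?_ ?_
  · rintro ⟨c, z⟩ h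
    exact (Finset.mem_filter.1 (Finset.mem_sigma.1 h).2).1
  · rintro ⟨c, z⟩ h ⟨c', z'⟩ h' e
    have h1 := (Finset.mem_filter.1 (Finset.mem_sigma.1 h).2).2
    have h2 := (Finset.mem_filter.1 (Finset.mem_sigma.1 h').2).2
    simp only at e h1 h2
    subst e
    rw [h1] at h2
    subst h2
    rfl

variable {p : ℕ} [Fact p.Prime]

def rr (A B : Finset (ZMod p)) (x : ZMod p) : ℕ := ((A ×ˢ B).filter (fun q => q.1 - q.2 = x)).card

/-- number of triples with `a (s + b)` in the product set -/
def WW (A B S : Finset (ZMod p)) : ℕ :=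
  ∑ s ∈ S, ∑ c ∈ A * A, ((A ×ˢ B).filter (fun q => q.1 * (s + q.2) = c)).card

lemma WW_lower (A B S : Finset (ZMod p)) (t : ℕ) (hS : ∀ x ∈ S, t ≤ rr A B x) :
    t * A.card * S.card ≤ WW A B S := by
  unfold WW
  rw [mul_comm, ← smul_eq_mul]
  refine Finset.card_nsmul_le_sum _ _ _ (fun s hs => ?_)
  have h1 : ((A ×ˢ B).filter (fun q => q.1 * (s + q.2) ∈ A * A)).card
      ≤ ∑ c ∈ A * A, ((A ×ˢ B).filter (fun q => q.1 * (s + q.2) = c)).card := by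
    rw [Finset.card_eq_sum_card_fiberwise (t := A * A) (f := fun q => q.1 * (s + q.2))]
    · refine Finset.sum_le_sum (fun c _ => Finset.card_le_card ?_)
      intro q hq
      simp only [Finset.mem_filter] at hq ⊢
      exact ⟨hq.1.1, hq.2⟩
    · intro q hq
      exact (Finset.mem_filter.1 hq).2
  refine le_trans ?_ h1
  refine le_trans (Nat.mul_le_mul_right _ (hS s hs)) ?_
  unfold rr
  rw [← Finset.card_product]
  refine Finset.card_le_card_of_injOn (fun z => (z.2, z.1.2)) ?_ ?_
  · rintro ⟨⟨a, b⟩, a'⟩ h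
    simp only [Finset.mem_coe, Finset.mem_product, Finset.mem_filter] at h ⊢
    refine ⟨⟨h.2, h.1.1.2⟩, Finset.mul_mem_mul h.2 ?_⟩
    rw [← h.1.2, sub_add_cancel]; exact h.1.1.1
  · rintro ⟨⟨a, b⟩, a'⟩ h ⟨⟨c, d⟩, c'⟩ h' e
    simp only [Finset.mem_coe, Finset.mem_product, Finset.mem_filter, Prod.mk.injEq] at h h' e ⊢
    refine ⟨⟨?_, e.2⟩, e.1⟩
    have h1 := h.1.2
    rw [← h'.1.2, e.2] at h1
    exact sub_left_injective h1

lemma WW_sq (A B S : Finset (ZMod p)) : WW A B S ^ 2 ≤ (A * A).card * QQ A B S := by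
  have e : WW A B S = ∑ c ∈ A * A, ((A ×ˢ B ×ˢ S).filter (fun u => u.1 * (u.2.2 + u.2.1) = c)).card := by
    unfold WW
    rw [Finset.sum_comm]
    refine Finset.sum_congr rfl (fun c _ => ?_)
    rw [← Finset.card_sigma]
    refine Finset.card_bij' (fun z _ => (z.2.1, z.2.2, z.1)) (fun u _ => ⟨u.2.2, (u.1, u.2.1)⟩) ?_ ?_ ?_ ?_
    · rintro ⟨s, a, b⟩ h
      simp only [Finset.mem_sigma, Finset.mem_filter, Finset.mem_product] at h ⊢
      exact ⟨⟨h.2.1.1, h.2.1.2, h.1⟩, h.2.2⟩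
    · rintro ⟨a, b, s⟩ h
      simp only [Finset.mem_sigma, Finset.mem_filter, Finset.mem_product] at h ⊢
      exact ⟨h.1.2.2, ⟨h.1.1, h.1.2.1⟩, h.2⟩
    · intros; rfl
    · intros; rfl
  rw [e]
  refine (sq_sum_le_card_mul_sum_sq (s := A * A)).trans ?_
  exact Nat.mul_le_mul_left _ (sum_fiber_sq _ (fun u : ZMod p × ZMod p × ZMod p => u.1 * (u.2.2 + u.2.1)) _)

lemma moment2 (A B : Finset (ZMod p)) (hA : 0 ∉ A) :
    ∑ s : ZMod p, ∑ c : ZMod p, ((A ×ˢ B).filter (fun q => q.1 * (s + q.2) = c)).card ^ 2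
      ≤ A.card * B.card * p + (A.card * B.card) ^ 2 := by
  set T := A ×ˢ B with hT
  have hTc : T.card = A.card * B.card := Finset.card_product _ _
  calc _ ≤ ∑ s : ZMod p, ((T ×ˢ T).filter (fun z => z.1.1 * (s + z.1.2) = z.2.1 * (s + z.2.2))).card :=
        Finset.sum_le_sum (fun s _ => sum_fiber_sq T (fun q : ZMod p × ZMod p => q.1 * (s + q.2)) _)
    _ = ∑ z ∈ T ×ˢ T, (Finset.univ.filter (fun s : ZMod p => z.1.1 * (s + z.1.2) = z.2.1 * (s + z.2.2))).card := by
        simp only [Finset.card_filter]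
        exact Finset.sum_comm
    _ ≤ ∑ z ∈ T ×ˢ T, ((if z.1 = z.2 then p else 0) + 1) := by
        refine Finset.sum_le_sum (fun z hz => ?_)
        by_cases h : z.1 = z.2
        · rw [if_pos h]
          refine (Finset.card_le_univ _).trans ?_
          rw [ZMod.card]; omega
        · rw [if_neg h, zero_add, Finset.card_le_one]
          intro s hs s' hs'
          simp only [Finset.mem_filter, Finset.mem_univ, true_and] at hs hs'
          obtain ⟨⟨a, b⟩, ⟨a', b'⟩⟩ := z
          simp only [hT, Finset.mem_product] at hs hs' hz
          have e : (a - a') * (s - s') = 0 := by linear_combination hs - hs'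
          rcases mul_eq_zero.1 e with e | e
          · exfalso
            have e := sub_eq_zero.1 e
            subst e
            have ha : a ≠ 0 := fun h0 => hA (h0 ▸ hz.1.1)
            have := add_left_cancel (mul_left_cancel₀ ha hs)
            exact h (by rw [this])
          · exact sub_eq_zero.1 e
    _ = A.card * B.card * p + (A.card * B.card) ^ 2 := by
        rw [Finset.sum_add_distrib, Finset.sum_const, Finset.card_product, hTc, Finset.sum_product]
        have : ∀ x ∈ T, ∑ y ∈ T, (if (x, y).1 = (x, y).2 then p else 0) = p := by
          intro x hx
          simp [hx]
        rw [Finset.sum_congr rfl this, Finset.sum_const, hTc]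
        simp only [smul_eq_mul]; ring

lemma WW_upper (A B S : Finset (ZMod p)) (hA : 0 ∉ A) :
    ((WW A B S : ℝ) - (A.card * B.card * (A * A).card * S.card : ℝ) / p) ^ 2
      ≤ ((A * A).card * S.card : ℝ) * (A.card * B.card * p) := by
  have hp : (p : ℝ) ≠ 0 := by exact_mod_cast (Fact.out : p.Prime).ne_zero
  set n : ZMod p × ZMod p → ℝ := fun z => (((A ×ˢ B).filter (fun q => q.1 * (z.1 + q.2) = z.2)).card : ℝ) with hn
  set m : ℝ := (A.card * B.card : ℝ) / p with hm
  have e1 : (WW A B S : ℝ) - (A.card * B.card * (A * A).card * S.card : ℝ) / p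
      = ∑ z ∈ S ×ˢ (A * A), (n z - m) := by
    rw [Finset.sum_sub_distrib, Finset.sum_const, Finset.card_product, Finset.sum_product]
    unfold WW
    push_cast
    rw [nsmul_eq_mul, hm]
    push_cast
    ring
  have e2 : ∑ z : ZMod p × ZMod p, n z = p * (A.card * B.card) := by
    rw [Fintype.sum_prod_type]
    have : ∀ s : ZMod p, ∑ c : ZMod p, n (s, c) = A.card * B.card := by
      intro s
      simp only [hn]
      rw [← Nat.cast_sum, ← Finset.card_eq_sum_card_fiberwise (fun _ _ => Finset.mem_coe.2 (Finset.mem_univ _)), Finset.card_product]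
      push_cast; ring
    simp only [this, Finset.sum_const, Finset.card_univ, ZMod.card, nsmul_eq_mul]
  have e3 : ∑ z : ZMod p × ZMod p, n z ^ 2 ≤ A.card * B.card * p + (A.card * B.card) ^ 2 := by
    rw [Fintype.sum_prod_type]
    have := moment2 A B hA
    simp only [hn]
    exact_mod_cast this
  have e4 : ∑ z : ZMod p × ZMod p, (n z - m) ^ 2 ≤ A.card * B.card * p := by
    have : ∑ z : ZMod p × ZMod p, (n z - m) ^ 2 = ∑ z : ZMod p × ZMod p, n z ^ 2
        - 2 * m * ∑ z : ZMod p × ZMod p, n z + p * p * m ^ 2 := by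
      simp only [sub_sq, Finset.sum_add_distrib, Finset.sum_sub_distrib, Finset.sum_const,
        Finset.card_univ, Fintype.card_prod, ZMod.card, nsmul_eq_mul, Nat.cast_mul]
      rw [Finset.mul_sum]
      congr 2
      refine Finset.sum_congr rfl (fun z _ => by ring)
    rw [this, e2]
    have hmp : m * p = A.card * B.card := by rw [hm]; field_simp
    have : (p * p * m ^ 2 : ℝ) = (A.card * B.card) ^ 2 := by rw [← hmp]; ring
    rw [this]
    have : 2 * m * (p * (A.card * B.card)) = 2 * (A.card * B.card : ℝ) ^ 2 := by
      rw [show 2 * m * (p * (A.card * B.card)) = 2 * (m * p) * (A.card * B.card : ℝ) by ring, hmp]; ring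
    rw [this]; linarith
  rw [e1]
  refine (sq_sum_le_card_mul_sum_sq (s := S ×ˢ (A * A))).trans ?_
  rw [Finset.card_product]
  push_cast
  rw [mul_comm (S.card : ℝ)]
  refine mul_le_mul_of_nonneg_left (le_trans ?_ e4) (by positivity)
  exact Finset.sum_le_sum_of_subset_of_nonneg (Finset.subset_univ _) (fun _ _ _ => sq_nonneg _)
end
end RPP

namespace RPP
section

lemma num1 (a b c s t : ℝ) (ha : 1 ≤ a) (hb : 1 ≤ b) (hs : 1 ≤ s) (ht : 1 ≤ t)
    (hac : a ≤ c) (hta : t ≤ a) (hts : t * s ≤ a * b) (h : a ^ 3 ≤ b ^ 2) :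
    a * t ^ 4 * s ≤ b ^ 3 * c ^ 2 := by
  have h1 : t ^ 3 ≤ b ^ 2 := (pow_le_pow_left₀ (by linarith) hta 3).trans h
  calc a * t ^ 4 * s = a * (t * s) * t ^ 3 := by ring
    _ ≤ a * (a * b) * b ^ 2 := by gcongr
    _ = b ^ 3 * a ^ 2 := by ring
    _ ≤ b ^ 3 * c ^ 2 := by gcongr

lemma num2 (a b c s t : ℝ) (ha : 1 ≤ a) (hb : 1 ≤ b) (hs : 1 ≤ s) (ht : 1 ≤ t)
    (hac : a ≤ c) (htb : t ≤ b) (h : b * s ≤ a) :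
    a * t ^ 4 * s ≤ b ^ 3 * c ^ 2 := by
  calc a * t ^ 4 * s ≤ a * b ^ 4 * s := by gcongr
    _ = a * b ^ 3 * (b * s) := by ring
    _ ≤ a * b ^ 3 * a := by gcongr
    _ = b ^ 3 * a ^ 2 := by ring
    _ ≤ b ^ 3 * c ^ 2 := by gcongr

lemma num3 (a b c s t : ℝ) (ha : 1 ≤ a) (hb : 1 ≤ b) (hs : 1 ≤ s) (ht : 1 ≤ t)
    (hac : a ≤ c) (hta : t ≤ a) (htb : t ≤ b) (h : a * s ≤ b) :
    a * t ^ 4 * s ≤ b ^ 3 * c ^ 2 := by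
  calc a * t ^ 4 * s = (a * s) * t ^ 2 * t ^ 2 := by ring
    _ ≤ b * a ^ 2 * b ^ 2 := by gcongr
    _ = b ^ 3 * a ^ 2 := by ring
    _ ≤ b ^ 3 * c ^ 2 := by gcongr

lemma num4 (a b c s t p X : ℝ) (ha : 1 ≤ a) (hb : 1 ≤ b) (hs : 1 ≤ s) (ht : 1 ≤ t) (hp : 1 ≤ p)
    (hac : a ≤ c) (hta : t ≤ a) (hts : t * s ≤ a * b) (hap : a ^ 3 ≤ p ^ 2)
    (hX : t * a * s ≤ X) (hX2 : (X - a * b * c * s / p) ^ 2 ≤ (c * s) * (a * b * p))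
    (hN : p ^ 2 ≤ 144 * (a * b * s)) :
    a * t ^ 4 * s ≤ 2304 * (b ^ 3 * c ^ 2) := by
  have hc : 1 ≤ c := ha.trans hac
  by_cases h : t * p ≤ 2 * (b * c)
  · have h1 : (t * p) ^ 2 ≤ (2 * (b * c)) ^ 2 := pow_le_pow_left₀ (by positivity) h 2
    have h2 : (a * t ^ 4 * s) * p ^ 2 ≤ (2304 * (b ^ 3 * c ^ 2)) * p ^ 2 := by
      calc (a * t ^ 4 * s) * p ^ 2 = a * t * (t * s) * (t * p) ^ 2 := by ring
        _ ≤ a * a * (a * b) * (2 * (b * c)) ^ 2 := by gcongr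
        _ = 4 * (b ^ 3 * c ^ 2) * a ^ 3 := by ring
        _ ≤ 2304 * (b ^ 3 * c ^ 2) * p ^ 2 := by gcongr; norm_num
    exact le_of_mul_le_mul_right h2 (by positivity)
  · push Not at h
    have h0 : a * b * c * s / p ≤ t * a * s / 2 := by
      rw [div_le_div_iff₀ (by linarith) (by norm_num)]
      have := mul_le_mul_of_nonneg_left h.le (show 0 ≤ a * s by positivity)
      nlinarith
    have h1 : (t * a * s / 2) ^ 2 ≤ (c * s) * (a * b * p) :=
      (pow_le_pow_left₀ (by positivity) (by linarith) 2).trans hX2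
    have h2 : (a * s) * (t ^ 2 * a * s) ≤ (a * s) * (4 * c * b * p) := by nlinarith
    have h3 := le_of_mul_le_mul_left h2 (by positivity)
    have h4 : (t ^ 2 * a * s) ^ 2 ≤ (4 * c * b * p) ^ 2 := pow_le_pow_left₀ (by positivity) h3 2
    have h5 : (a * s) * (a * t ^ 4 * s) ≤ (a * s) * (2304 * (b ^ 3 * c ^ 2)) := by
      calc (a * s) * (a * t ^ 4 * s) = (t ^ 2 * a * s) ^ 2 := by ring
        _ ≤ (4 * c * b * p) ^ 2 := h4
        _ = 16 * c ^ 2 * b ^ 2 * p ^ 2 := by ring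
        _ ≤ 16 * c ^ 2 * b ^ 2 * (144 * (a * b * s)) := by gcongr
        _ = _ := by ring
    exact le_of_mul_le_mul_left h5 (by positivity)

variable {p : ℕ} [Fact p.Prime]

lemma rr_le_A (A B : Finset (ZMod p)) (x : ZMod p) : rr A B x ≤ A.card := by
  refine Finset.card_le_card_of_injOn (fun q => q.1) ?_ ?_
  · intro q hq
    exact (Finset.mem_product.1 (Finset.mem_filter.1 hq).1).1
  · rintro ⟨a, b⟩ h ⟨a', b'⟩ h' e
    have h1 := (Finset.mem_filter.1 h).2
    have h2 := (Finset.mem_filter.1 h').2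
    simp only at e h1 h2
    subst e
    rw [← h2] at h1
    rw [sub_right_injective h1]

lemma rr_le_B (A B : Finset (ZMod p)) (x : ZMod p) : rr A B x ≤ B.card := by
  refine Finset.card_le_card_of_injOn (fun q => q.2) ?_ ?_
  · intro q hq
    exact (Finset.mem_product.1 (Finset.mem_filter.1 hq).1).2
  · rintro ⟨a, b⟩ h ⟨a', b'⟩ h' e
    have h1 := (Finset.mem_filter.1 h).2
    have h2 := (Finset.mem_filter.1 h').2
    simp only at e h1 h2
    subst e
    rw [← h2] at h1
    rw [sub_left_injective h1]

lemma rr_sum (A B S : Finset (ZMod p)) : ∑ x ∈ S, rr A B x ≤ A.card * B.card := by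
  rw [← Finset.card_product]
  unfold rr
  rw [← Finset.card_sigma]
  refine Finset.card_le_card_of_injOn (fun z => z.2) ?_ ?_
  · rintro ⟨c, z⟩ h
    exact (Finset.mem_filter.1 (Finset.mem_sigma.1 h).2).1
  · rintro ⟨c, z⟩ h ⟨c', z'⟩ h' e
    have h1 := (Finset.mem_filter.1 (Finset.mem_sigma.1 h).2).2
    have h2 := (Finset.mem_filter.1 (Finset.mem_sigma.1 h').2).2
    simp only at e h1 h2
    subst e
    rw [h1] at h2
    subst h2
    rfl

/-- The logarithmic factor. -/
noncomputable def LL (n : ℕ) : ℝ := max 1 (Real.log n)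

lemma one_le_LL (n : ℕ) : 1 ≤ LL n := le_max_left _ _

lemma log_index (a N i : ℕ) (ha : 1 ≤ a) (hi : 4 ^ i ≤ 4 * N) (hN : N ≤ a ^ 5) : ((i:ℝ) + 1) ≤ 7 * LL a := by
  have h1 : (4:ℝ) ^ i ≤ 4 * (a:ℝ) ^ 5 := by exact_mod_cast hi.trans (Nat.mul_le_mul_left 4 hN)
  have ha' : (0:ℝ) < a := by exact_mod_cast ha
  have h2 := Real.log_le_log (by positivity) h1
  rw [Real.log_pow, Real.log_mul (by norm_num) (by positivity), Real.log_pow] at h2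
  have h4 : (1:ℝ) ≤ Real.log 4 := by
    rw [Real.le_log_iff_exp_le (by norm_num)]
    have := Real.exp_one_lt_d9
    linarith
  have h5 : 0 ≤ Real.log a := Real.log_nonneg (by exact_mod_cast ha)
  have h6 : Real.log a ≤ LL a := le_max_right _ _
  have h7 := one_le_LL a
  have h8 : (i:ℝ) ≤ 1 + 5 * Real.log a := by
    by_contra hc
    push Not at hc
    push_cast at h2
    nlinarith
  linarith

lemma num5 (N k i Q : ℕ) (hi : 4 ^ i ≤ 4 * N) (hk : k ^ 2 ≤ N)
    (hQ : Q ≤ (12 * 2 ^ i + k) * (N + 1632 * i * 4 ^ i)) :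
    Q ^ 2 ≤ 1154 * 6528 ^ 2 * (i + 1) ^ 2 * N ^ 3 := by
  have h1 : N + 1632 * i * 4 ^ i ≤ 6528 * (i + 1) * N := by
    have := Nat.mul_le_mul_left (1632 * i) hi
    nlinarith
  have h2 : (12 * 2 ^ i + k) ^ 2 ≤ 1154 * N := by
    have e : (4:ℕ) ^ i = (2 ^ i) ^ 2 := by
      rw [← pow_mul, mul_comm i 2, pow_mul]; norm_num
    rw [e] at hi
    zify at hi hk ⊢
    nlinarith [sq_nonneg ((12:ℤ) * 2 ^ i - k)]
  calc Q ^ 2 ≤ ((12 * 2 ^ i + k) * (N + 1632 * i * 4 ^ i)) ^ 2 := Nat.pow_le_pow_left hQ 2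
    _ = (12 * 2 ^ i + k) ^ 2 * (N + 1632 * i * 4 ^ i) ^ 2 := by ring
    _ ≤ (1154 * N) * (6528 * (i + 1) * N) ^ 2 := by gcongr
    _ = _ := by ring

lemma level (A B S : Finset (ZMod p)) (hA : 0 ∉ A) (hA1 : A.Nonempty) (hap : A.card ^ 3 ≤ p ^ 2)
    (t : ℕ) (ht : 1 ≤ t) (hS : ∀ x ∈ S, t ≤ rr A B x) :
    (A.card : ℝ) * (t:ℝ) ^ 4 * S.card ≤
      10 ^ 13 * LL A.card ^ 2 * ((B.card : ℝ) ^ 3 * ((A * A).card : ℝ) ^ 2) := by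
  rcases S.eq_empty_or_nonempty with rfl | ⟨x0, hx0⟩
  · simp; positivity
  have hta := (hS x0 hx0).trans (rr_le_A A B x0)
  have htb := (hS x0 hx0).trans (rr_le_B A B x0)
  have hts : t * S.card ≤ A.card * B.card := by
    refine le_trans ?_ (rr_sum A B S)
    rw [mul_comm, ← smul_eq_mul]
    exact Finset.card_nsmul_le_sum _ _ _ hS
  have hac : A.card ≤ (A * A).card := by
    obtain ⟨a0, ha0⟩ := hA1
    have h0 : a0 ≠ 0 := fun h => hA (h ▸ ha0)
    refine Finset.card_le_card_of_injOn (fun a => a0 * a) (fun a ha => Finset.mul_mem_mul ha0 ha) ?_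
    intro a _ a' _ e
    exact mul_left_cancel₀ h0 e
  have hs1 : 1 ≤ S.card := Finset.card_pos.2 ⟨x0, hx0⟩
  have hW := WW_lower A B S t hS
  have hW2 := WW_sq A B S
  have hWu := WW_upper A B S hA
  have hQ := QQ_le A B S hA
  have hp1 : 1 ≤ p := (Fact.out : p.Prime).one_lt.le
  set a := A.card
  set b := B.card
  set s := S.card
  set c := (A * A).card
  set X := WW A B S
  set Q := QQ A B S
  have ha1 : 1 ≤ a := ht.trans hta
  have hb1 : 1 ≤ b := ht.trans htb
  have hL := one_le_LL a
  have hL2 : 1 ≤ LL a ^ 2 := one_le_pow₀ hL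
  have fin : ∀ D : ℝ, D ≤ 10 ^ 13 → (a:ℝ) * (t:ℝ) ^ 4 * s ≤ D * ((b:ℝ) ^ 3 * (c:ℝ) ^ 2) →
      (a:ℝ) * (t:ℝ) ^ 4 * s ≤ 10 ^ 13 * LL a ^ 2 * ((b:ℝ) ^ 3 * (c:ℝ) ^ 2) := by
    intro D hD h
    refine h.trans (mul_le_mul_of_nonneg_right ?_ (by positivity))
    linarith
  have ra1 : (1:ℝ) ≤ a := by exact_mod_cast ha1
  have rb1 : (1:ℝ) ≤ b := by exact_mod_cast hb1
  have rs1 : (1:ℝ) ≤ s := by exact_mod_cast hs1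
  have rt1 : (1:ℝ) ≤ t := by exact_mod_cast ht
  have rac : (a:ℝ) ≤ c := by exact_mod_cast hac
  have rta : (t:ℝ) ≤ a := by exact_mod_cast hta
  have rtb : (t:ℝ) ≤ b := by exact_mod_cast htb
  have rts : (t:ℝ) * s ≤ a * b := by exact_mod_cast hts
  have rap : (a:ℝ) ^ 3 ≤ (p:ℝ) ^ 2 := by exact_mod_cast hap
  by_cases c1 : a ^ 3 ≤ b ^ 2
  · exact fin 1 (by norm_num) (by
      rw [one_mul]; exact num1 _ _ _ _ _ ra1 rb1 rs1 rt1 rac rta rts (by exact_mod_cast c1))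
  by_cases c2 : b * s ≤ a
  · exact fin 1 (by norm_num) (by
      rw [one_mul]; exact num2 _ _ _ _ _ ra1 rb1 rs1 rt1 rac rtb (by exact_mod_cast c2))
  by_cases c3 : a * s ≤ b
  · exact fin 1 (by norm_num) (by
      rw [one_mul]; exact num3 _ _ _ _ _ ra1 rb1 rs1 rt1 rac rta rtb (by exact_mod_cast c3))
  by_cases c4 : p ^ 2 ≤ 144 * (a * b * s)
  · refine fin 2304 (by norm_num) ?_
    exact num4 _ _ _ _ _ (p:ℝ) (X:ℝ) ra1 rb1 rs1 rt1 (by exact_mod_cast hp1) rac rta rts rap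
      (by exact_mod_cast hW) hWu (by exact_mod_cast c4)
  push Not at c1 c2 c3 c4
  set N := a * b * s with hN
  have hN1 : 1 ≤ N := Nat.mul_pos (Nat.mul_pos ha1 hb1) hs1
  have hsab : s ≤ a * b := le_trans (Nat.le_mul_of_pos_left s ht) hts
  set i := Nat.log 4 N + 1 with hidef
  have hi1 : N ≤ 4 ^ i := (Nat.lt_pow_succ_log_self (by norm_num) N).le
  have hi2 : 4 ^ i ≤ 4 * N := by
    have := Nat.pow_log_le_self 4 (show N ≠ 0 by omega)
    rw [hidef, pow_succ]; omega
  have hip : 6 * 2 ^ i < p := by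
    refine lt_of_pow_lt_pow_left₀ 2 (by omega) ?_
    have e : (4:ℕ) ^ i = (2 ^ i) ^ 2 := by
      rw [← pow_mul, mul_comm i 2, pow_mul]; norm_num
    rw [e] at hi2
    rw [mul_pow]; omega
  set k := max a (max b s) with hk
  have hk2 : k ^ 2 ≤ N := by
    rcases max_choice a (max b s) with h | h
    · rw [hk, h, hN, sq, mul_assoc]; exact Nat.mul_le_mul_left _ c2.le
    · rcases max_choice b s with h' | h'
      · rw [hk, h, h', hN, sq, mul_comm a b, mul_assoc]; exact Nat.mul_le_mul_left _ c3.le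
      · rw [hk, h, h', hN, sq]; exact Nat.mul_le_mul_right _ hsab
  have hQ1 := hQ k (ha1.trans (le_max_left _ _)) (le_max_left _ _)
    ((le_max_left _ _).trans (le_max_right _ _)) ((le_max_right _ _).trans (le_max_right _ _)) i hi1 hip
  have hQ2 := num5 N k i Q hi2 hk2 hQ1
  have hN5 : N ≤ a ^ 5 := by
    calc N ≤ a * b * (a * b) := Nat.mul_le_mul_left _ hsab
      _ = a ^ 2 * b ^ 2 := by ring
      _ ≤ a ^ 2 * a ^ 3 := Nat.mul_le_mul_left _ c1.le
      _ = a ^ 5 := by ring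
  have hJ := log_index a N i ha1 hi2 hN5
  have hJ2 : ((i:ℝ) + 1) ^ 2 ≤ 49 * LL a ^ 2 := by
    calc ((i:ℝ) + 1) ^ 2 ≤ (7 * LL a) ^ 2 := pow_le_pow_left₀ (by positivity) hJ 2
      _ = _ := by ring
  have h4 : (t * a * s) ^ 4 ≤ c ^ 2 * (1154 * 6528 ^ 2 * (i + 1) ^ 2 * N ^ 3) := by
    calc (t * a * s) ^ 4 = ((t * a * s) ^ 2) ^ 2 := by ring
      _ ≤ (c * Q) ^ 2 := Nat.pow_le_pow_left ((Nat.pow_le_pow_left hW 2).trans hW2) 2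
      _ = c ^ 2 * Q ^ 2 := by ring
      _ ≤ _ := Nat.mul_le_mul_left _ hQ2
  have r4 : ((t:ℝ) * a * s) ^ 4 ≤ (c:ℝ) ^ 2 * (1154 * 6528 ^ 2 * ((i:ℝ) + 1) ^ 2 * ((a:ℝ) * b * s) ^ 3) := by
    rw [hN] at h4
    exact_mod_cast h4
  have h5 : ((a:ℝ) ^ 3 * (s:ℝ) ^ 3) * ((a:ℝ) * (t:ℝ) ^ 4 * s) ≤ ((a:ℝ) ^ 3 * (s:ℝ) ^ 3) *
      (10 ^ 13 * LL a ^ 2 * ((b:ℝ) ^ 3 * (c:ℝ) ^ 2)) := by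
    calc _ = ((t:ℝ) * a * s) ^ 4 := by ring
      _ ≤ _ := r4
      _ ≤ (c:ℝ) ^ 2 * (1154 * 6528 ^ 2 * (49 * LL a ^ 2) * ((a:ℝ) * b * s) ^ 3) := by gcongr
      _ = (1154 * 6528 ^ 2 * 49) * (LL a ^ 2 * (((a:ℝ) ^ 3 * (s:ℝ) ^ 3) * ((b:ℝ) ^ 3 * (c:ℝ) ^ 2))) := by ring
      _ ≤ 10 ^ 13 * (LL a ^ 2 * (((a:ℝ) ^ 3 * (s:ℝ) ^ 3) * ((b:ℝ) ^ 3 * (c:ℝ) ^ 2))) := by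
        refine mul_le_mul_of_nonneg_right (by norm_num) (by positivity)
      _ = _ := by ring
  exact le_of_mul_le_mul_left h5 (by positivity)
end
end RPP

namespace RPP
section

lemma pow_four_le_sum (r : ℕ) : (r:ℝ) ^ 4 ≤ ∑ t ∈ Finset.range r, 4 * ((t:ℝ) + 1) ^ 3 := by
  induction r with
  | zero => simp
  | succ r ih =>
    rw [Finset.sum_range_succ]
    push_cast
    have : (0:ℝ) ≤ r := Nat.cast_nonneg r
    nlinarith [pow_nonneg this 2, pow_nonneg this 3]

lemma sum_inv_le (a : ℕ) : ∑ t ∈ Finset.range a, ((t:ℝ) + 1)⁻¹ ≤ 2 * LL a := by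
  have h := harmonic_le_one_add_log a
  have e : ((harmonic a : ℚ) : ℝ) = ∑ t ∈ Finset.range a, ((t:ℝ) + 1)⁻¹ := by
    unfold harmonic; push_cast; rfl
  rw [e] at h
  have h6 : Real.log a ≤ LL a := le_max_right _ _
  have h7 := one_le_LL a
  linarith

variable {p : ℕ} [Fact p.Prime]

lemma energy (A B X : Finset (ZMod p)) (hA : 0 ∉ A) (hA1 : A.Nonempty) (hap : A.card ^ 3 ≤ p ^ 2) :
    (A.card : ℝ) * ∑ x ∈ X, (rr A B x : ℝ) ^ 4 ≤
      8 * 10 ^ 13 * LL A.card ^ 3 * ((B.card : ℝ) ^ 3 * ((A * A).card : ℝ) ^ 2) := by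
  set G : ℝ := 10 ^ 13 * LL A.card ^ 2 * ((B.card : ℝ) ^ 3 * ((A * A).card : ℝ) ^ 2) with hG
  have hG0 : 0 ≤ G := by rw [hG]; positivity
  have h1 : ∑ x ∈ X, (rr A B x : ℝ) ^ 4 ≤
      ∑ t ∈ Finset.range A.card, 4 * ((t:ℝ) + 1) ^ 3 * (X.filter (fun x => t + 1 ≤ rr A B x)).card := by
    have : ∀ t ∈ Finset.range A.card, 4 * ((t:ℝ) + 1) ^ 3 * (X.filter (fun x => t + 1 ≤ rr A B x)).card
        = ∑ x ∈ X, if t + 1 ≤ rr A B x then 4 * ((t:ℝ) + 1) ^ 3 else 0 := by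
      intro t _
      rw [← Finset.sum_filter, Finset.sum_const, nsmul_eq_mul, mul_comm]
    rw [Finset.sum_congr rfl this, Finset.sum_comm]
    refine Finset.sum_le_sum (fun x _ => ?_)
    refine (pow_four_le_sum _).trans ?_
    rw [← Finset.sum_filter]
    refine Finset.sum_le_sum_of_subset_of_nonneg ?_ (fun _ _ _ => by positivity)
    intro t ht
    have := rr_le_A A B x
    simp only [Finset.mem_range, Finset.mem_filter] at ht ⊢
    omega
  have h2 : ∀ t ∈ Finset.range A.card, (A.card : ℝ) * (4 * ((t:ℝ) + 1) ^ 3 * (X.filter (fun x => t + 1 ≤ rr A B x)).card)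
      ≤ 4 * G * ((t:ℝ) + 1)⁻¹ := by
    intro t _
    have := level A B (X.filter (fun x => t + 1 ≤ rr A B x)) hA hA1 hap (t+1) (by omega)
      (fun x hx => (Finset.mem_filter.1 hx).2)
    push_cast at this
    rw [← div_eq_mul_inv, le_div_iff₀ (by positivity)]
    linarith
  calc (A.card : ℝ) * ∑ x ∈ X, (rr A B x : ℝ) ^ 4
      ≤ (A.card : ℝ) * ∑ t ∈ Finset.range A.card, 4 * ((t:ℝ) + 1) ^ 3 * (X.filter (fun x => t + 1 ≤ rr A B x)).card := by gcongr
    _ = ∑ t ∈ Finset.range A.card, (A.card : ℝ) * (4 * ((t:ℝ) + 1) ^ 3 * (X.filter (fun x => t + 1 ≤ rr A B x)).card) := Finset.mul_sum _ _ _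
    _ ≤ ∑ t ∈ Finset.range A.card, 4 * G * ((t:ℝ) + 1)⁻¹ := Finset.sum_le_sum h2
    _ = 4 * G * ∑ t ∈ Finset.range A.card, ((t:ℝ) + 1)⁻¹ := (Finset.mul_sum _ _ _).symm
    _ ≤ 4 * G * (2 * LL A.card) := mul_le_mul_of_nonneg_left (sum_inv_le _) (by positivity)
    _ = _ := by rw [hG]; ring

lemma rr_split (A B : Finset (ZMod p)) (x : ZMod p) : rr A B x ≤ rr (A.erase 0) B x + rr {0} B x := by
  unfold rr
  refine le_trans (Finset.card_le_card ?_) (Finset.card_union_le _ _)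
  intro q hq
  simp only [Finset.mem_filter, Finset.mem_product, Finset.mem_union, Finset.mem_erase,
    Finset.mem_singleton] at hq ⊢
  by_cases h : q.1 = 0
  · exact Or.inr ⟨⟨h, hq.1.2⟩, hq.2⟩
  · exact Or.inl ⟨⟨⟨h, hq.1.1⟩, hq.1.2⟩, hq.2⟩

lemma card_le_AA (A : Finset (ZMod p)) : A.card ≤ (A * A).card := by
  by_cases h : ∃ a0 ∈ A, a0 ≠ 0
  · obtain ⟨a0, ha0, h0⟩ := h
    refine Finset.card_le_card_of_injOn (fun a => a0 * a) (fun a ha => Finset.mul_mem_mul ha0 ha) ?_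
    intro a _ a' _ e
    exact mul_left_cancel₀ h0 e
  · push Not at h
    refine Finset.card_le_card (fun a ha => ?_)
    have := Finset.mul_mem_mul ha ha
    rw [h a ha, mul_zero] at this
    rw [h a ha]; exact this

lemma num6 (a a' b c c' l l' E : ℝ) (hl0 : 0 ≤ l') (hb : 0 ≤ b) (hc0 : 0 ≤ c') (hE : 0 ≤ E)
    (ha : a ≤ 2 * a') (hl : l' ≤ l) (hc : c' ≤ c)
    (h : a' * E ≤ 8 * 10 ^ 13 * l' ^ 3 * (b ^ 3 * c' ^ 2)) :
    a * E ≤ 16 * 10 ^ 13 * l ^ 3 * (b ^ 3 * c ^ 2) := by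
  have h1 : a * E ≤ 2 * a' * E := mul_le_mul_of_nonneg_right ha hE
  have h2 : l' ^ 3 * (b ^ 3 * c' ^ 2) ≤ l ^ 3 * (b ^ 3 * c ^ 2) := by
    have hl1 : 0 ≤ l := hl0.trans hl
    gcongr
  linarith

lemma num7 (l M x y : ℝ) (h3 : x ≤ 16 * 10 ^ 13 * l * M) (h2 : y ≤ l * M) (h0 : 0 ≤ l * M) :
    8 * x + 8 * y ≤ 2 * 10 ^ 15 * l * M := by
  linarith

lemma energy_full (A B X : Finset (ZMod p)) (hA : A.Nonempty) (hB : B.Nonempty)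
    (hap : A.card ^ 3 ≤ p ^ 2) :
    (A.card : ℝ) * ∑ x ∈ X, (rr A B x : ℝ) ^ 4 ≤
      2 * 10 ^ 15 * LL A.card ^ 3 * ((B.card : ℝ) ^ 3 * ((A * A).card : ℝ) ^ 2) := by
  have hL := one_le_LL A.card
  have hL3 : 1 ≤ LL A.card ^ 3 := one_le_pow₀ hL
  set M : ℝ := (B.card : ℝ) ^ 3 * ((A * A).card : ℝ) ^ 2 with hM
  have hM0 : 0 ≤ M := by positivity
  have ha1 : (1:ℝ) ≤ A.card := by exact_mod_cast Finset.card_pos.2 hA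
  have hb1 : (1:ℝ) ≤ B.card := by exact_mod_cast Finset.card_pos.2 hB
  have hac : (A.card : ℝ) ≤ (A * A).card := by exact_mod_cast card_le_AA A
  have h1 : ∑ x ∈ X, (rr A B x : ℝ) ^ 4 ≤ 8 * ∑ x ∈ X, (rr (A.erase 0) B x : ℝ) ^ 4 + 8 * B.card := by
    have hu : ∑ x ∈ X, (rr {0} B x : ℝ) ≤ B.card := by
      have := rr_sum {0} B X
      rw [Finset.card_singleton, one_mul] at this
      exact_mod_cast this
    have : ∀ x ∈ X, (rr A B x : ℝ) ^ 4 ≤ 8 * (rr (A.erase 0) B x : ℝ) ^ 4 + 8 * (rr {0} B x : ℝ) := by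
      intro x _
      have e1 : (rr A B x : ℝ) ≤ rr (A.erase 0) B x + rr {0} B x := by exact_mod_cast rr_split A B x
      have e2 : rr {0} B x ≤ 1 := by simpa using rr_le_A {0} B x
      have e3 : (rr {0} B x : ℝ) ^ 4 = rr {0} B x := by
        interval_cases h : rr {0} B x <;> simp
      refine (pow_le_pow_left₀ (by positivity) e1 4).trans ?_
      refine (add_pow_le (by positivity) (by positivity) 4).trans ?_
      rw [e3]; norm_num; linarith
    refine (Finset.sum_le_sum this).trans ?_
    rw [Finset.sum_add_distrib, ← Finset.mul_sum, ← Finset.mul_sum]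
    linarith
  have h2 : (A.card : ℝ) * B.card ≤ M := by
    rw [hM]
    calc (A.card : ℝ) * B.card ≤ (A.card : ℝ) ^ 2 * (B.card:ℝ) ^ 3 := by
          gcongr
          · exact le_self_pow₀ ha1 (by norm_num)
          · exact le_self_pow₀ hb1 (by norm_num)
      _ ≤ ((A * A).card : ℝ) ^ 2 * (B.card:ℝ) ^ 3 := by gcongr
      _ = _ := mul_comm _ _
  have h3 : (A.card : ℝ) * ∑ x ∈ X, (rr (A.erase 0) B x : ℝ) ^ 4 ≤ 16 * 10 ^ 13 * LL A.card ^ 3 * M := by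
    rcases (A.erase 0).eq_empty_or_nonempty with h | h
    · rw [h]
      simp [rr]
      positivity
    · have hle : (A.erase 0).card ≤ A.card := Finset.card_le_card (Finset.erase_subset _ _)
      have he := energy (A.erase 0) B X (Finset.notMem_erase 0 A) h ((Nat.pow_le_pow_left hle 3).trans hap)
      have hpos := Finset.card_pos.2 h
      have h2 : (A.card : ℝ) ≤ 2 * (A.erase 0).card := by
        have := Finset.pred_card_le_card_erase (s := A) (a := 0)
        exact_mod_cast (by omega : A.card ≤ 2 * (A.erase 0).card)
      have hLL : LL (A.erase 0).card ≤ LL A.card := by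
        unfold LL
        refine max_le_max le_rfl (Real.log_le_log (by exact_mod_cast hpos) (by exact_mod_cast hle))
      have hLL1 := one_le_LL (A.erase 0).card
      have hcc : ((A.erase 0 * A.erase 0).card : ℝ) ≤ (A * A).card := by
        exact_mod_cast Finset.card_le_card (Finset.mul_subset_mul (Finset.erase_subset _ _) (Finset.erase_subset _ _))
      have hs0 : 0 ≤ ∑ x ∈ X, (rr (A.erase 0) B x : ℝ) ^ 4 := Finset.sum_nonneg (fun _ _ => by positivity)
      exact num6 _ _ _ _ _ _ _ _ (by linarith) (Nat.cast_nonneg _) (Nat.cast_nonneg _) hs0 h2 hLL hcc he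
  have h4 : M ≤ LL A.card ^ 3 * M := le_mul_of_one_le_left hM0 hL3
  calc (A.card : ℝ) * ∑ x ∈ X, (rr A B x : ℝ) ^ 4
      ≤ A.card * (8 * ∑ x ∈ X, (rr (A.erase 0) B x : ℝ) ^ 4 + 8 * B.card) := by gcongr
    _ = 8 * (A.card * ∑ x ∈ X, (rr (A.erase 0) B x : ℝ) ^ 4) + 8 * (A.card * B.card) := by ring
    _ ≤ 2 * 10 ^ 15 * LL A.card ^ 3 * M := num7 _ _ _ _ h3 (h2.trans h4) (hM0.trans h4)
end
end RPP

theorem stmt_15 :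
    ∃ C : ℝ, 0 < C ∧
      ∀ (p : ℕ), p.Prime →
        ∀ (A B : Finset (ZMod p)), A.Nonempty → B.Nonempty →
          (A.card : ℝ) < (p : ℝ) ^ ((2 : ℝ) / 3) →
          (∑ x ∈ A - B, (((A ×ˢ B).filter (fun q => q.1 - q.2 = x)).card : ℝ) ^ 4) ≤
            C * (max 1 (Real.log A.card)) ^ C
              * (B.card : ℝ) ^ 3 * ((A * A).card : ℝ) ^ 2 * (A.card : ℝ)⁻¹ := by
  refine ⟨2 * 10 ^ 15, by norm_num, ?_⟩
  intro p hp A B hA hB hlt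
  have : Fact p.Prime := ⟨hp⟩
  have hap : A.card ^ 3 ≤ p ^ 2 := by
    have h := pow_le_pow_left₀ (by positivity) hlt.le 3
    rw [← Real.rpow_natCast ((p:ℝ) ^ ((2:ℝ)/3)), ← Real.rpow_mul (by positivity)] at h
    norm_num at h
    exact_mod_cast h
  have he := RPP.energy_full A B (A - B) hA hB hap
  have ha : (0:ℝ) < A.card := by exact_mod_cast Finset.card_pos.2 hA
  rw [← div_eq_mul_inv, le_div_iff₀ ha, mul_comm]
  have hL : RPP.LL A.card ^ 3 ≤ (max 1 (Real.log A.card)) ^ ((2 * 10 ^ 15 : ℝ)) := by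
    rw [← Real.rpow_natCast]
    exact Real.rpow_le_rpow_of_exponent_le (RPP.one_le_LL _) (by norm_num)
  refine he.trans ?_
  rw [mul_assoc _ ((B.card : ℝ) ^ 3)]
  exact mul_le_mul_of_nonneg_right (mul_le_mul_of_nonneg_left hL (by norm_num)) (by positivity)
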